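/- arXiv:1101.1856 — 3 statements merged into one kernel-verified Lean document; each statement's English description precedes it below -/
import Mathlib

section
/- Every continuous image of a Peano continuum (in a Hausdorff space) is arcwise connected: if X is a compact, connected, locally connected metric space and f : X → Z is continuous with Z Hausdorff and metrizable, then any two distinct points of f(X) are joined by an arc in f(X). -/
open Set

/-- An eventually constant chain from `a` to `b` with steps shorter than `δ`. -/
def PChain {X : Type} [MetricSpace X] (δ : ℝ) (a b : X) (N : ℕ) (c : ℕ → X) : Prop :=
  c 0 = a ∧ (∀ j, N ≤ j → c j = b) ∧ ∀ j, dist (c j) (c (j + 1)) < δ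

lemma exists_pchain {X : Type} [MetricSpace X] {C : Set X} (hC : IsPreconnected C)
    {δ : ℝ} (hδ : 0 < δ) {x y : X} (hx : x ∈ C) (hy : y ∈ C) :
    ∃ (N : ℕ) (c : ℕ → X), PChain δ x y N c ∧ (∀ j, c j ∈ C) ∧ (x = y → ∀ j, c j = x) := by
  by_cases hxy : x = y
  · subst hxy
    exact ⟨0, fun _ => x, ⟨rfl, fun _ _ => rfl, fun _ => by simpa using hδ⟩, fun _ => hx,
      fun _ _ => rfl⟩
  have key : Relation.ReflTransGen (fun u v : X => u ∈ C ∧ v ∈ C ∧ dist u v < δ) x y := by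
    apply hC.induction₂' (fun u v => Relation.ReflTransGen
      (fun u v : X => u ∈ C ∧ v ∈ C ∧ dist u v < δ) u v) _ _ hx hy
    · intro u hu
      filter_upwards [self_mem_nhdsWithin, mem_nhdsWithin_of_mem_nhds (Metric.ball_mem_nhds u hδ)]
        with v hv hv'
      rw [Metric.mem_ball] at hv'
      exact ⟨.single ⟨hu, hv, by rwa [dist_comm]⟩, .single ⟨hv, hu, hv'⟩⟩
    · intro u v w _ _ _ h1 h2
      exact h1.trans h2
  have : ∃ (N : ℕ) (c : ℕ → X), PChain δ x y N c ∧ (∀ j, c j ∈ C) := by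
    clear hxy hy
    induction key with
    | refl => exact ⟨0, fun _ => x, ⟨rfl, fun _ _ => rfl, fun _ => by simpa using hδ⟩, fun _ => hx⟩
    | @tail v w _ h ih =>
      obtain ⟨N, c, ⟨h0, h1, h2⟩, h3⟩ := ih
      refine ⟨N + 1, fun j => if j ≤ N then c j else w, ⟨by simp [h0], ?_, ?_⟩, ?_⟩
      · intro j hj
        simp [show ¬ j ≤ N by omega]
      · intro j
        rcases lt_trichotomy j N with hj | hj | hj
        · simp [hj.le, show j + 1 ≤ N by omega, h2]
        · subst hj
          simp [h1 j le_rfl, h.2.2]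
        · simp [show ¬ j ≤ N by omega, show ¬ j + 1 ≤ N by omega, hδ]
      · intro j
        dsimp only
        split_ifs
        · exact h3 j
        · exact h.2.1
  obtain ⟨N, c, h, h'⟩ := this
  exact ⟨N, c, h, h', fun h => absurd h hxy⟩

lemma unif_loc_conn (X : Type) [MetricSpace X] [CompactSpace X] [LocallyConnectedSpace X]
    {ε : ℝ} (hε : 0 < ε) : ∃ δ > 0, ∀ x y : X, dist x y < δ →
      ∃ C : Set X, IsPreconnected C ∧ x ∈ C ∧ y ∈ C ∧ ∀ z ∈ C, dist x z < ε := by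
  obtain ⟨δ, hδ, h⟩ := lebesgue_number_lemma_of_metric (s := (univ : Set X)) isCompact_univ
    (c := fun z => connectedComponentIn (Metric.ball z (ε / 2)) z)
    (fun z => Metric.isOpen_ball.connectedComponentIn)
    (fun z _ => mem_iUnion.2 ⟨z, mem_connectedComponentIn (Metric.mem_ball_self (by positivity))⟩)
  refine ⟨δ, hδ, fun x y hxy => ?_⟩
  obtain ⟨z, hz⟩ := h x trivial
  have hx := hz (Metric.mem_ball_self hδ)
  refine ⟨_, isPreconnected_connectedComponentIn, hx,
    hz (by rwa [Metric.mem_ball, dist_comm]), fun w hw => ?_⟩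
  have h1 := Metric.mem_ball.1 (connectedComponentIn_subset _ _ hx)
  have h2 := Metric.mem_ball.1 (connectedComponentIn_subset _ _ hw)
  have := dist_triangle_right x w z
  linarith

lemma pchain_refine {X : Type} [MetricSpace X] {ε δ δ' : ℝ} (hδ' : 0 < δ')
    (H : ∀ x y : X, dist x y < δ →
      ∃ C : Set X, IsPreconnected C ∧ x ∈ C ∧ y ∈ C ∧ ∀ z ∈ C, dist x z < ε)
    {a b : X} {N : ℕ} {c : ℕ → X} (hc : PChain δ a b N c) :
    ∃ (M : ℕ) (c' : ℕ → X), M ≠ 0 ∧ PChain δ' a b (N * M) c' ∧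
      ∀ j, dist (c (j / M)) (c' j) < ε := by
  obtain ⟨h0, h1, h2⟩ := hc
  have : ∀ i, ∃ (L : ℕ) (d : ℕ → X), PChain δ' (c i) (c (i+1)) L d ∧
      (∀ j, dist (c i) (d j) < ε) ∧ (c i = c (i+1) → ∀ j, d j = c i) := by
    intro i
    obtain ⟨C, hC, hx, hy, hz⟩ := H _ _ (h2 i)
    obtain ⟨L, d, h, h', h''⟩ := exists_pchain hC hδ' hx hy
    exact ⟨L, d, h, fun j => hz _ (h' j), h''⟩
  choose L d hd hε hcon using this
  obtain ⟨M, hM0, hM⟩ : ∃ M : ℕ, M ≠ 0 ∧ ∀ i < N, L i ≤ M := by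
    refine ⟨(Finset.range N).sup L + 1, by omega, fun i hi => ?_⟩
    have := Finset.le_sup (f := L) (Finset.mem_range.2 hi)
    omega
  have hend : ∀ i, d i M = c (i+1) := by
    intro i
    by_cases hi : i < N
    · exact (hd i).2.1 _ (hM i hi)
    · have e : c i = c (i+1) := by rw [h1 i (by omega), h1 (i+1) (by omega)]
      rw [hcon i e M, e]
  have hMp : 0 < M := Nat.pos_of_ne_zero hM0
  refine ⟨M, fun j => d (j / M) (j % M), hM0, ⟨?_, ?_, ?_⟩, fun j => hε _ _⟩
  · simp [(hd 0).1, h0]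
  · intro j hj
    have hi : N ≤ j / M := (Nat.le_div_iff_mul_le hMp).2 hj
    have e : c (j/M) = c (j/M+1) := by rw [h1 _ hi, h1 (j/M+1) (by omega)]
    simp only [hcon _ e, h1 _ hi]
  · intro j
    have hlt := Nat.mod_lt j hMp
    have hdm := Nat.div_add_mod j M
    by_cases hj : j % M + 1 < M
    · have e1 : (j + 1) / M = j / M := by
        rw [Nat.div_eq_iff hMp]
        rw [Nat.mul_comm (j / M) M]
        constructor <;> omega
      have e2 : (j + 1) % M = j % M + 1 := by
        have := Nat.div_add_mod (j+1) M
        rw [e1] at this; omega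
      simp only [e1, e2]
      exact (hd _).2.2 _
    · have hj' : j % M + 1 = M := by omega
      have e0 : j + 1 = M * (j / M + 1) := by rw [mul_add]; omega
      have e1 : (j + 1) / M = j / M + 1 := by rw [e0, Nat.mul_div_cancel_left _ hMp]
      have e2 : (j + 1) % M = 0 := by rw [e0, Nat.mul_mod_right]
      simp only [e1, e2, (hd (j/M+1)).1, ← hend]
      have := (hd (j/M)).2.2 (j % M)
      rwa [hj'] at this

open Filter Topology in
lemma exists_path_of_peano {X : Type} [MetricSpace X] [CompactSpace X] [ConnectedSpace X]
    [LocallyConnectedSpace X] (a b : X) : ∃ p : ℝ → X, Continuous p ∧ p 0 = a ∧ p 1 = b := by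
  have hpos : ∀ n : ℕ, (0:ℝ) < 1 / 2 / 2 ^ n := fun n => by positivity
  have : ∀ n : ℕ, ∃ δ : ℝ, 0 < δ ∧ δ ≤ 1 / 2 / 2 ^ n ∧ ∀ x y : X, dist x y < δ →
      ∃ C : Set X, IsPreconnected C ∧ x ∈ C ∧ y ∈ C ∧ ∀ z ∈ C, dist x z < 1 / 2 / 2 ^ n := by
    intro n
    obtain ⟨δ, hδ, h⟩ := unif_loc_conn X (hpos n)
    exact ⟨min δ _, lt_min hδ (hpos n), min_le_right _ _,
      fun x y hxy => h x y (hxy.trans_le (min_le_left _ _))⟩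
  choose δ hδ hδ' H using this
  let S : ℕ → Type := fun n => {q : ℕ × (ℕ → X) // PChain (δ n) a b q.1 q.2}
  obtain ⟨N0, c0, hc0, -⟩ := exists_pchain (C := (univ : Set X)) isPreconnected_univ (hδ 0)
    (mem_univ a) (mem_univ b)
  have step : ∀ n (q : S n), ∃ q' : S (n+1), ∀ t : ℝ,
      dist (q.1.2 ⌊t * q.1.1⌋₊) (q'.1.2 ⌊t * q'.1.1⌋₊) ≤ 1 / 2 / 2 ^ n := by
    rintro n ⟨⟨N, c⟩, hc⟩
    obtain ⟨M, c', hM, hc', h⟩ := pchain_refine (hδ (n+1)) (H n) hc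
    refine ⟨⟨⟨N * M, c'⟩, hc'⟩, fun t => ?_⟩
    have := h ⌊t * (N * M : ℕ)⌋₊
    rw [show t * ((N * M : ℕ) : ℝ) = (t * N) * (M : ℕ) by push_cast; ring,
      Nat.mul_cast_floor_div_cancel hM] at this
    have e : t * ((N * M : ℕ) : ℝ) = (t * N) * (M : ℕ) := by push_cast; ring
    simp only [e]
    exact this.le
  choose nx hnx using step
  let q : ∀ n, S n := fun n => Nat.rec ⟨⟨N0, c0⟩, hc0⟩ nx n
  have hq : ∀ n, q (n+1) = nx n (q n) := fun n => rfl
  let P : ℕ → ℝ → X := fun n t => (q n).1.2 ⌊t * (q n).1.1⌋₊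
  have hP : ∀ t n, dist (P n t) (P (n+1) t) ≤ 1 / 2 / 2 ^ n := fun t n => by
    simp only [P, hq]; exact hnx n (q n) t
  have hlim : ∀ t, ∃ x, Tendsto (fun n => P n t) atTop (𝓝 x) := fun t =>
    cauchySeq_tendsto_of_complete (cauchySeq_of_le_geometric_two (hP t))
  choose p hp using hlim
  have hd : ∀ t n, dist (P n t) (p t) ≤ 1 / 2 ^ n := fun t n =>
    dist_le_of_le_geometric_two_of_tendsto (hP t) (hp t) n
  refine ⟨p, ?_, ?_, ?_⟩
  · rw [Metric.continuous_iff]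
    intro t ε hε
    obtain ⟨n, hn⟩ := exists_pow_lt_of_lt_one (show (0:ℝ) < ε / 3 by positivity)
      (show (1/2 : ℝ) < 1 by norm_num)
    have hn : (1:ℝ) / 2 ^ n < ε / 3 := by simpa using hn
    refine ⟨1 / ((q n).1.1 + 1), by positivity, fun s hs => ?_⟩
    have hclose : dist (P n s) (P n t) ≤ 1 / 2 / 2 ^ n := by
      have hb : ∀ u v : ℝ, u ≤ v → v - u < 1 / ((q n).1.1 + 1) →
          dist (P n u) (P n v) ≤ 1 / 2 / 2 ^ n := by
        intro u v huv h
        have hN : (0:ℝ) ≤ ((q n).1.1 : ℝ) := Nat.cast_nonneg _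
        rw [lt_div_iff₀ (by positivity)] at h
        have h1 : v * ((q n).1.1 : ℝ) ≤ u * ((q n).1.1 : ℝ) + 1 := by nlinarith
        have h2 : ⌊u * ((q n).1.1 : ℝ)⌋₊ ≤ ⌊v * ((q n).1.1 : ℝ)⌋₊ :=
          Nat.floor_mono (by nlinarith)
        have h3 : ⌊v * ((q n).1.1 : ℝ)⌋₊ ≤ ⌊u * ((q n).1.1 : ℝ)⌋₊ + 1 := by
          by_cases hu : 0 ≤ u * ((q n).1.1 : ℝ)
          · rw [← Nat.floor_add_one hu]
            exact Nat.floor_mono h1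
          · have : v * ((q n).1.1 : ℝ) ≤ (1 : ℕ) := by push_cast; linarith
            have := Nat.floor_le_of_le this
            omega
        have h4 : ⌊v * ((q n).1.1 : ℝ)⌋₊ = ⌊u * ((q n).1.1 : ℝ)⌋₊ ∨
          ⌊v * ((q n).1.1 : ℝ)⌋₊ = ⌊u * ((q n).1.1 : ℝ)⌋₊ + 1 := by omega
        simp only [P]
        rcases h4 with h4 | h4 <;> rw [h4]
        · rw [dist_self]; exact (hpos n).le
        · exact ((q n).2.2.2 _).le.trans (hδ' n)
      rw [Real.dist_eq] at hs
      rcases le_total s t with h | h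
      · exact hb s t h (by rw [abs_sub_comm] at hs; exact (le_abs_self _).trans_lt hs)
      · rw [dist_comm]; exact hb t s h ((le_abs_self _).trans_lt hs)
    have h1 := hd s n
    have h2 := hd t n
    have h3 := dist_triangle4 (p s) (P n s) (P n t) (p t)
    rw [dist_comm (p s) (P n s)] at h3
    have h4 : (1:ℝ) / 2 / 2 ^ n ≤ 1 / 2 ^ n := by
      apply div_le_div_of_nonneg_right <;> norm_num
    linarith
  · refine tendsto_nhds_unique (hp 0) ?_
    have : (fun n => P n 0) = fun _ => a := by
      funext n
      simp only [P, zero_mul, Nat.floor_zero]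
      exact (q n).2.1
    rw [this]; exact tendsto_const_nhds
  · refine tendsto_nhds_unique (hp 1) ?_
    have : (fun n => P n 1) = fun _ => b := by
      funext n
      simp only [P, one_mul, Nat.floor_natCast]
      exact (q n).2.2.1 _ le_rfl
    rw [this]; exact tendsto_const_nhds

/-- Closed subsets of `[0,1]` across whose gaps `γ` takes equal values. -/
def PAdm {Z : Type} (γ : ℝ → Z) (K : Set ℝ) : Prop :=
  IsClosed K ∧ K ⊆ Icc 0 1 ∧ (0:ℝ) ∈ K ∧ (1:ℝ) ∈ K ∧
    ∀ u ∈ K, ∀ v ∈ K, u < v → (∀ k ∈ K, u < k → k < v → False) → γ u = γ v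

lemma PAdm.lr {Z : Type} {γ : ℝ → Z} {K : Set ℝ} (hK : PAdm γ K) {t : ℝ} (ht : t ∈ Icc (0:ℝ) 1) :
    ∃ l r : ℝ, l ∈ K ∧ r ∈ K ∧ l ≤ t ∧ t ≤ r ∧ (∀ k ∈ K, k ≤ t → k ≤ l) ∧
      (∀ k ∈ K, t ≤ k → r ≤ k) ∧ γ l = γ r := by
  obtain ⟨hc, hs, h0, h1, hg⟩ := hK
  have hcomp : IsCompact K := isCompact_Icc.of_isClosed_subset hc hs
  obtain ⟨l, ⟨hl, hlt⟩, hl'⟩ := (hcomp.inter_right (isClosed_Iic (a := t))).exists_isGreatest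
    ⟨0, h0, ht.1⟩
  obtain ⟨r, ⟨hr, hrt⟩, hr'⟩ := (hcomp.inter_right (isClosed_Ici (a := t))).exists_isLeast
    ⟨1, h1, ht.2⟩
  simp only [mem_Iic, mem_Ici] at hlt hrt
  refine ⟨l, r, hl, hr, hlt, hrt, fun k hk hkt => hl' ⟨hk, hkt⟩, fun k hk hkt => hr' ⟨hk, hkt⟩, ?_⟩
  rcases (hlt.trans hrt).eq_or_lt with h | h
  · rw [h]
  · refine hg l hl r hr h fun k hk h1 h2 => ?_
    rcases le_total k t with h3 | h3
    · exact absurd (hl' ⟨hk, h3⟩) (not_le.2 h1)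
    · exact absurd (hr' ⟨hk, h3⟩) (not_le.2 h2)

lemma exists_min_padm {Z : Type} [MetricSpace Z] {γ : ℝ → Z} (hγ : Continuous γ) :
    ∃ K, Minimal (· ∈ {K | PAdm γ K}) K := by
  apply zorn_superset
  intro c hcS hch
  rcases c.eq_empty_or_nonempty with rfl | ⟨K0, hK0⟩
  · refine ⟨Icc 0 1, ⟨isClosed_Icc, Subset.rfl, by simp, by simp, ?_⟩, by simp⟩
    intro u hu v hv huv h
    exact (h ((u+v)/2) ⟨by linarith [hu.1, hv.1], by linarith [hu.2, hv.2]⟩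
      (by linarith) (by linarith)).elim
  refine ⟨⋂₀ c, ⟨isClosed_sInter fun K hK => (hcS hK).1,
    (sInter_subset_of_mem hK0).trans (hcS hK0).2.1,
    fun K hK => (hcS hK).2.2.1, fun K hK => (hcS hK).2.2.2.1, ?_⟩,
    fun K hK => sInter_subset_of_mem hK⟩
  intro u hu v hv huv hgap
  apply eq_of_forall_dist_le
  intro ε hε
  obtain ⟨δ1, hδ1, H1⟩ := Metric.continuous_iff.1 hγ u (ε/2) (by positivity)
  obtain ⟨δ2, hδ2, H2⟩ := Metric.continuous_iff.1 hγ v (ε/2) (by positivity)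
  obtain ⟨η, hη, hη1, hη2, hη3⟩ : ∃ η > 0, η < δ1 ∧ η < δ2 ∧ η < (v - u)/2 := by
    obtain ⟨η, h, h'⟩ := exists_between
      (show 0 < min δ1 (min δ2 ((v-u)/2)) from lt_min hδ1 (lt_min hδ2 (by linarith)))
    simp only [lt_min_iff] at h'
    exact ⟨η, h, h'⟩
  have : Nonempty c := ⟨⟨K0, hK0⟩⟩
  obtain ⟨⟨K, hK⟩, hKJ⟩ := (isCompact_Icc (a := u+η) (b := v-η)).elim_directed_family_closed
    (fun K : c => (K : Set ℝ)) (fun K => (hcS K.2).1) (by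
      rw [← sInter_eq_iInter, eq_empty_iff_forall_notMem]
      rintro x ⟨hx, hx'⟩
      exact hgap x hx' (by linarith [hx.1]) (by linarith [hx.2])) (by
      rintro ⟨A, hA⟩ ⟨B, hB⟩
      rcases hch.total hA hB with h | h
      · exact ⟨⟨A, hA⟩, Subset.rfl, h⟩
      · exact ⟨⟨B, hB⟩, h, Subset.rfl⟩)
  have hKa : PAdm γ K := hcS hK
  have huK := hKa.2.1 (hu K hK)
  have hvK := hKa.2.1 (hv K hK)
  obtain ⟨l, r, hl, hr, hlm, hmr, hl', hr', e⟩ := hKa.lr (t := (u+v)/2)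
    ⟨by linarith [huK.1, hvK.1], by linarith [huK.2, hvK.2]⟩
  have hul := hl' u (hu K hK) (by linarith)
  have hrv := hr' v (hv K hK) (by linarith)
  have hno : ∀ x ∈ K, u + η ≤ x → x ≤ v - η → False := fun x hx h1 h2 => by
    have : x ∈ Icc (u+η) (v-η) ∩ K := ⟨⟨h1, h2⟩, hx⟩
    rw [hKJ] at this
    exact this
  have hl2 : l < u + η := by
    by_contra! h
    exact hno l hl h (by linarith)
  have hr2 : v - η < r := by
    by_contra! h
    exact hno r hr (by linarith) h
  have d1 := H1 l (by rw [Real.dist_eq, abs_lt]; constructor <;> linarith)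
  have d2 := H2 r (by rw [Real.dist_eq, abs_lt]; constructor <;> linarith)
  rw [e, dist_comm] at d1
  have := dist_triangle (γ u) (γ r) (γ v)
  linarith

lemma exists_monotone_path {Z : Type} [MetricSpace Z] {γ : ℝ → Z} (hγ : Continuous γ) :
    ∃ g : unitInterval → Z, Continuous g ∧ g 0 = γ 0 ∧ g 1 = γ 1 ∧ range g ⊆ range γ ∧
      ∀ s w t, s ≤ w → w ≤ t → g s = g t → g w = g s := by
  obtain ⟨K, hK, hmin⟩ := exists_min_padm hγ
  have hK : PAdm γ K := hK
  have : ∀ t : unitInterval, ∃ l r : ℝ, l ∈ K ∧ r ∈ K ∧ l ≤ t ∧ t ≤ r ∧ (∀ k ∈ K, k ≤ t → k ≤ l) ∧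
      (∀ k ∈ K, t ≤ k → r ≤ k) ∧ γ l = γ r := fun t => hK.lr t.2
  choose l r hl hr hlt htr hl' hr' hlr using this
  refine ⟨fun t => γ (l t), ?_, ?_, ?_, ?_, ?_⟩
  · have huc : UniformContinuousOn γ (Icc 0 1) :=
      isCompact_Icc.uniformContinuousOn_of_continuous hγ.continuousOn
    rw [Metric.uniformContinuousOn_iff] at huc
    rw [Metric.continuous_iff]
    intro t ε hε
    obtain ⟨δ, hδ, H⟩ := huc ε hε
    have key : ∀ s t : unitInterval, s ≤ t → (t:ℝ) - s < δ → dist (γ (l s)) (γ (l t)) < ε := by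
      intro s t hst hd
      have hst' : (s:ℝ) ≤ t := hst
      by_cases h : (s:ℝ) ≤ l t
      · rw [hlr s]
        have h1 := hr' s _ (hl t) h
        have h2 := htr s
        have h3 := hlt t
        exact H _ (hK.2.1 (hr s)) _ (hK.2.1 (hl t))
          (by rw [Real.dist_eq, abs_lt]; constructor <;> linarith)
      · have h1 := hl' s _ (hl t) (not_le.1 h).le
        have h2 := hl' t _ (hl s) ((hlt s).trans hst')
        rw [le_antisymm h1 h2, dist_self]
        exact hε
    refine ⟨δ, hδ, fun s hs => ?_⟩
    rw [Subtype.dist_eq, Real.dist_eq, abs_lt] at hs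
    rcases le_total s t with h | h
    · exact key s t h (by linarith)
    · rw [dist_comm]; exact key t s h (by linarith)
  · have h1 := hlt 0
    have h2 := (hK.2.1 (hl 0)).1
    rw [show ((0 : unitInterval) : ℝ) = 0 from rfl] at h1
    simp only [le_antisymm h1 h2]
  · have h1 := hl' 1 1 hK.2.2.2.1 (by simp)
    have h2 := (hK.2.1 (hl 1)).2
    simp only [le_antisymm h2 h1]
  · rintro _ ⟨t, rfl⟩
    exact ⟨_, rfl⟩
  · intro s w t hsw hwt hst
    have hsw' : (s:ℝ) ≤ w := hsw
    have hwt' : (w:ℝ) ≤ t := hwt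
    dsimp only at hst ⊢
    rw [hlr t] at hst
    have hadm : PAdm γ (K \ Ioo (l s) (r t)) := by
      refine ⟨hK.1.sdiff isOpen_Ioo, sdiff_subset.trans hK.2.1, ⟨hK.2.2.1, ?_⟩,
        ⟨hK.2.2.2.1, ?_⟩, ?_⟩
      · exact fun h => absurd h.1 (not_lt.2 (hK.2.1 (hl s)).1)
      · exact fun h => absurd h.2 (not_lt.2 (hK.2.1 (hr t)).2)
      · rintro u ⟨hu, hu'⟩ v ⟨hv, hv'⟩ huv hgap
        by_cases hk : ∃ k ∈ K, u < k ∧ k < v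
        · obtain ⟨k, hk, huk, hkv⟩ := hk
          have hkI : k ∈ Ioo (l s) (r t) := by
            by_contra h
            exact hgap k ⟨hk, h⟩ huk hkv
          have e1 : u = l s := by
            apply le_antisymm
            · by_contra! h
              exact hu' ⟨h, huk.trans hkI.2⟩
            · by_contra! h
              exact hgap (l s) ⟨hl s, fun h => lt_irrefl _ h.1⟩ h (hkI.1.trans hkv)
          have e2 : v = r t := by
            apply le_antisymm
            · by_contra! h
              exact hgap (r t) ⟨hr t, fun h => lt_irrefl _ h.2⟩ (huk.trans hkI.2) h
            · by_contra! h
              exact hv' ⟨hkI.1.trans hkv, h⟩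
          rw [e1, e2, hst]
        · push Not at hk
          exact hK.2.2.2.2 u hu v hv huv fun k h1 h2 h3 => absurd h3 (not_lt.2 (hk k h1 h2))
    have hsub : K ⊆ K \ Ioo (l s) (r t) := hmin hadm sdiff_subset
    have hw := (hsub (hl w)).2
    have h1 : l s ≤ l w := hl' w _ (hl s) ((hlt s).trans hsw')
    rcases h1.eq_or_lt with h1 | h1
    · rw [h1]
    · have h2 : r t ≤ l w := by
        by_contra! h
        exact hw ⟨h1, h⟩
      have h3 : l w ≤ r t := (hlt w).trans (hwt'.trans (htr t))
      rw [le_antisymm h3 h2, hst]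

lemma exists_param {Z : Type} [MetricSpace Z] {g : unitInterval → Z} (hg : Continuous g)
    (hm : ∀ s w t, s ≤ w → w ≤ t → g s = g t → g w = g s) :
    ∃ φ : unitInterval → ℝ, Continuous φ ∧ Monotone φ ∧ ∀ s t, φ s = φ t ↔ g s = g t := by
  let F : unitInterval → unitInterval → unitInterval → ℝ :=
    fun q t s => dist (g (max q (min s t))) (g q)
  let M : unitInterval → unitInterval → ℝ := fun q t => sSup (F q t '' univ)
  have hMc : ∀ q, Continuous (M q) := fun q =>
    isCompact_univ.continuous_sSup (f := F q) (by
      change Continuous fun p : unitInterval × unitInterval =>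
        dist (g (max q (min p.2 p.1))) (g q)
      fun_prop)
  obtain ⟨D, hD⟩ : ∃ D, ∀ x y, dist (g x) (g y) ≤ D := by
    obtain ⟨D, hD⟩ := Metric.isBounded_iff.1 (isCompact_range hg).isBounded
    exact ⟨D, fun x y => hD (mem_range_self x) (mem_range_self y)⟩
  have hbdd : ∀ q t, BddAbove (F q t '' univ) := fun q t => by
    refine ⟨D, ?_⟩
    rintro _ ⟨s, -, rfl⟩
    exact hD _ _
  have hle : ∀ q t s, F q t s ≤ M q t := fun q t s => le_csSup (hbdd q t) ⟨s, trivial, rfl⟩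
  have hMle : ∀ q t C, (∀ s, F q t s ≤ C) → M q t ≤ C := fun q t C h => by
    refine csSup_le ⟨F q t 0, 0, trivial, rfl⟩ ?_
    rintro _ ⟨s, -, rfl⟩
    exact h s
  have hM0 : ∀ q t, 0 ≤ M q t := fun q t => dist_nonneg.trans (hle q t 0)
  have hMD : ∀ q t, M q t ≤ D := fun q t => hMle q t D fun s => hD _ _
  have hMm : ∀ q, Monotone (M q) := by
    intro q t t' h
    apply hMle
    intro s
    have : F q t s = F q t' (min s t) := by
      simp only [F]
      rw [min_eq_left ((min_le_right s t).trans h)]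
    rw [this]
    exact hle _ _ _
  let x := TopologicalSpace.denseSeq unitInterval
  let φ : unitInterval → ℝ := fun t => ∑' n : ℕ, (1/2:ℝ)^n * M (x n) t
  have hsumD : Summable fun n : ℕ => (1/2:ℝ)^n * D := summable_geometric_two.mul_right D
  have hsum : ∀ t, Summable fun n : ℕ => (1/2:ℝ)^n * M (x n) t := fun t =>
    Summable.of_nonneg_of_le (fun n => mul_nonneg (by positivity) (hM0 _ _))
      (fun n => mul_le_mul_of_nonneg_left (hMD _ _) (by positivity)) hsumD
  have hφc : Continuous φ := continuous_tsum (fun n => continuous_const.mul (hMc _)) hsumD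
    (fun n t => by
      rw [Real.norm_of_nonneg (mul_nonneg (by positivity) (hM0 _ _))]
      exact mul_le_mul_of_nonneg_left (hMD _ _) (by positivity))
  have hφm : Monotone φ := fun s t h => (hsum s).tsum_le_tsum
    (fun n => mul_le_mul_of_nonneg_left (hMm _ h) (by positivity)) (hsum t)
  have key1 : ∀ s t, s ≤ t → g s = g t → φ s = φ t := by
    intro s t hst h
    apply congrArg tsum
    funext n
    congr 1
    apply le_antisymm (hMm _ hst)
    apply hMle
    intro w
    generalize x n = q
    by_cases hw : max q (min w t) ≤ s
    · have : F q t w = F q s (max q (min w t)) := by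
        simp only [F]
        rw [min_eq_left hw, max_eq_right (le_max_left _ _)]
      rw [this]; exact hle _ _ _
    · push Not at hw
      by_cases hq : q ≤ t
      · have e := hm s _ t hw.le (max_le hq (min_le_right _ _)) h
        by_cases hqs : q ≤ s
        · have : F q t w = F q s s := by
            simp only [F]
            rw [e, min_self, max_eq_right hqs]
          rw [this]; exact hle _ _ _
        · have e2 := hm s q t (not_le.1 hqs).le hq h
          have : F q t w = 0 := by
            simp only [F]
            rw [e, e2, dist_self]
          rw [this]; exact hM0 _ _
      · have : F q t w = 0 := by
          simp only [F]
          rw [max_eq_left ((min_le_right w t).trans (not_le.1 hq).le), dist_self]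
        rw [this]; exact hM0 _ _
  have key2 : ∀ s t, s ≤ t → φ s = φ t → g s = g t := by
    intro s t hst h
    by_contra hne
    have hst : s < t := lt_of_le_of_ne hst (by rintro rfl; exact hne rfl)
    -- every dense point in between has the value `g t`
    have hq : ∀ n, s < x n → x n < t → g (x n) = g t := by
      intro n h1 h2
      by_contra hn
      have hs0 : M (x n) s ≤ 0 := by
        apply hMle
        intro w
        simp only [F]
        rw [max_eq_left ((min_le_right w s).trans h1.le), dist_self]
      have ht0 : 0 < M (x n) t := by
        refine lt_of_lt_of_le ?_ (hle (x n) t t)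
        simp only [F]
        rw [min_self, max_eq_right h2.le]
        exact dist_pos.2 (Ne.symm hn)
      refine absurd h (ne_of_lt ?_)
      exact Summable.tsum_lt_tsum (i := n)
        (fun n => mul_le_mul_of_nonneg_left (hMm _ hst.le) (by positivity))
        (mul_lt_mul_of_pos_left (hs0.trans_lt ht0) (by positivity)) (hsum s) (hsum t)
    have hopen : IsOpen {w | g w ≠ g t} := isOpen_ne_fun hg continuous_const
    have hcl : s ∈ closure (Ioo s t) := by
      rw [closure_Ioo hst.ne]; exact ⟨le_rfl, hst.le⟩
    have hne' := mem_closure_iff.1 hcl _ hopen hne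
    obtain ⟨n, hn⟩ := (TopologicalSpace.denseRange_denseSeq unitInterval).exists_mem_open
      (hopen.inter isOpen_Ioo) hne'
    exact hn.1 (hq n hn.2.1 hn.2.2)
  refine ⟨φ, hφc, hφm, fun s t => ?_⟩
  rcases le_total s t with h | h
  · exact ⟨key2 s t h, key1 s t h⟩
  · exact ⟨fun e => (key2 t s h e.symm).symm, fun e => (key1 t s h e.symm).symm⟩

lemma exists_arc_of_path {Z : Type} [MetricSpace Z] {γ : ℝ → Z} (hγ : Continuous γ)
    (hne : γ 0 ≠ γ 1) : ∃ p : Path (γ 0) (γ 1), Function.Injective (fun t => p t) ∧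
      (range fun t => p t) ⊆ range γ := by
  obtain ⟨g, hg, g0, g1, hr, hm⟩ := exists_monotone_path hγ
  obtain ⟨φ, hφ, hmono, hiff⟩ := exists_param hg hm
  have hlt : φ 0 < φ 1 := lt_of_le_of_ne (hmono (by exact zero_le_one)) (by
    rw [Ne, hiff, g0, g1]; exact hne)
  have hL : 0 < φ 1 - φ 0 := by linarith
  let ψ : unitInterval → unitInterval := fun t => ⟨(φ t - φ 0) / (φ 1 - φ 0), by
    have h0 := hmono (show (0 : unitInterval) ≤ t from unitInterval.nonneg')
    have h1 := hmono (show t ≤ 1 from unitInterval.le_one')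
    constructor
    · exact div_nonneg (by linarith) hL.le
    · rw [div_le_one hL]; linarith⟩
  have hψc : Continuous ψ := by
    apply Continuous.subtype_mk
    fun_prop
  have hψ0 : ψ 0 = 0 := by apply Subtype.ext; simp [ψ]
  have hψ1 : ψ 1 = 1 := by apply Subtype.ext; simp [ψ, hL.ne']
  have hψs : Function.Surjective ψ := by
    intro u
    have := intermediate_value_univ 0 1 hψc
    rw [hψ0, hψ1] at this
    exact this ⟨unitInterval.nonneg', unitInterval.le_one'⟩
  have hψg : ∀ s t, ψ s = ψ t ↔ g s = g t := by
    intro s t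
    rw [← hiff]
    rw [Subtype.ext_iff]
    change (φ s - φ 0) / (φ 1 - φ 0) = (φ t - φ 0) / (φ 1 - φ 0) ↔ _
    rw [div_left_inj' hL.ne', sub_left_inj]
  choose σ hσ using hψs
  have hcomp : (fun u => g (σ u)) ∘ ψ = g := by
    funext t
    exact (hψg _ _).1 (hσ _)
  have hquot : Topology.IsQuotientMap ψ :=
    hψc.isClosedMap.isQuotientMap hψc fun u => ⟨σ u, hσ u⟩
  have hc : Continuous fun u => g (σ u) := by
    rw [hquot.continuous_iff, hcomp]; exact hg
  refine ⟨⟨⟨fun u => g (σ u), hc⟩, ?_, ?_⟩, ?_, ?_⟩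
  · have := congrFun hcomp 0
    simp only [Function.comp, hψ0] at this
    exact this.trans g0
  · have := congrFun hcomp 1
    simp only [Function.comp, hψ1] at this
    exact this.trans g1
  · intro u v huv
    have : g (σ u) = g (σ v) := huv
    rw [← hψg, hσ, hσ] at this
    exact this
  · rintro _ ⟨u, rfl⟩
    exact hr ⟨σ u, rfl⟩

/-- A continuous Hausdorff metrizable image of a Peano continuum is arcwise connected. -/
theorem stmt_2 {X Z : Type} [MetricSpace X] [CompactSpace X] [ConnectedSpace X]
    [LocallyConnectedSpace X] [TopologicalSpace Z] [T2Space Z]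
    [TopologicalSpace.MetrizableSpace Z]
    (f : X → Z) (hf : Continuous f) (a b : Z)
    (ha : a ∈ Set.range f) (hb : b ∈ Set.range f) (hab : a ≠ b) :
    ∃ γ : Path a b, Function.Injective (fun t => γ t) ∧
      (Set.range fun t => γ t) ⊆ Set.range f := by
  obtain ⟨x, rfl⟩ := ha
  obtain ⟨y, rfl⟩ := hb
  letI : MetricSpace Z := TopologicalSpace.metrizableSpaceMetric Z
  obtain ⟨p, hp, rfl, rfl⟩ := exists_path_of_peano x y
  obtain ⟨q, hq, hr⟩ := exists_arc_of_path (γ := f ∘ p) (hf.comp hp) hab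
  exact ⟨q, hq, hr.trans (range_comp_subset_range p f)⟩
end

section
/- Let X be a compact metric space with covering dimension at least 2 that is locally connected (a Peano space). Then there exists a topological embedding of the circle S¹ into X. -/
open Set

/-- Covering dimension at most `n`. -/
def CovDimLE (X : Type*) [TopologicalSpace X] (n : ℕ) : Prop :=
  ∀ U : Set (Set X), U.Finite → (∀ u ∈ U, IsOpen u) → ⋃₀ U = Set.univ →
    ∃ V : Set (Set X), V.Finite ∧ (∀ v ∈ V, IsOpen v) ∧ ⋃₀ V = Set.univ ∧
      (∀ v ∈ V, ∃ u ∈ U, v ⊆ u) ∧ ∀ x : X, {v ∈ V | x ∈ v}.ncard ≤ n + 1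


open Filter Topology

section PathPart

variable {X : Type*} [MetricSpace X]

/-- two points lie in a common small open connected set -/
def SmallConn (ε : ℝ) (a b : X) : Prop :=
  ∃ W : Set X, IsOpen W ∧ IsPreconnected W ∧ a ∈ W ∧ b ∈ W ∧ ∀ u ∈ W, ∀ v ∈ W, dist u v ≤ ε

lemma SmallConn.dist_le {ε : ℝ} {a b : X} (h : SmallConn ε a b) : dist a b ≤ ε := by
  obtain ⟨W, _, _, ha, hb, h⟩ := h
  exact h a ha b hb

lemma SmallConn.symm {ε : ℝ} {a b : X} (h : SmallConn ε a b) : SmallConn ε b a := by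
  obtain ⟨W, h1, h2, ha, hb, h⟩ := h
  exact ⟨W, h1, h2, hb, ha, h⟩

lemma SmallConn.eventually [LocallyConnectedSpace X] {ε : ℝ} (hε : 0 < ε) (a : X) :
    ∀ᶠ b in 𝓝 a, SmallConn ε a b := by
  obtain ⟨W, hW, hWo, haW, hWc⟩ := locallyConnectedSpace_iff_subsets_isOpen_isConnected.1
    ‹_› a (Metric.ball a (ε / 2)) (Metric.ball_mem_nhds a (by positivity))
  filter_upwards [hWo.mem_nhds haW] with b hb
  refine ⟨W, hWo, hWc.isPreconnected, haW, hb, fun u hu v hv => ?_⟩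
  have h1 := Metric.mem_ball.1 (hW hu)
  have h2 := Metric.mem_ball'.1 (hW hv)
  linarith [dist_triangle u a v]

lemma SmallConn.refl [LocallyConnectedSpace X] {ε : ℝ} (hε : 0 < ε) (a : X) : SmallConn ε a a :=
  (SmallConn.eventually hε a).self_of_nhds

lemma exists_chain [LocallyConnectedSpace X] {ε δ : ℝ} (hδ : 0 < δ) {a b : X}
    (h : SmallConn ε a b) :
    ∃ L : ℕ, ∃ p : ℕ → X, p 0 = a ∧ (∀ i, L ≤ i → p i = b) ∧
      (∀ i, SmallConn δ (p i) (p (i + 1))) ∧ ∀ i, dist (p i) a ≤ ε := by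
  obtain ⟨W, hWo, hWc, ha, hb, hW⟩ := h
  have key : Relation.ReflTransGen (fun u v => u ∈ W ∧ v ∈ W ∧ SmallConn δ u v) a b := by
    refine hWc.induction₂' (fun u v => Relation.ReflTransGen
      (fun u v => u ∈ W ∧ v ∈ W ∧ SmallConn δ u v) u v) ?_ ?_ ha hb
    · intro x hx
      filter_upwards [self_mem_nhdsWithin, mem_nhdsWithin_of_mem_nhds
        (SmallConn.eventually hδ x)] with y hy hxy
      exact ⟨Relation.ReflTransGen.single ⟨hx, hy, hxy⟩,
        Relation.ReflTransGen.single ⟨hy, hx, hxy.symm⟩⟩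
    · intro x y z _ _ _ h1 h2
      exact h1.trans h2
  suffices H : ∃ L : ℕ, ∃ p : ℕ → X, p 0 = a ∧ (∀ i, L ≤ i → p i = b) ∧
      (∀ i, SmallConn δ (p i) (p (i + 1))) ∧ ∀ i, p i ∈ W by
    obtain ⟨L, p, h0, h1, h2, h3⟩ := H
    exact ⟨L, p, h0, h1, h2, fun i => hW _ (h3 i) _ ha⟩
  clear ha
  induction key using Relation.ReflTransGen.head_induction_on with
  | refl => exact ⟨0, fun _ => b, rfl, fun _ _ => rfl, fun _ => SmallConn.refl hδ b, fun _ => hb⟩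
  | head hac _ ih =>
    obtain ⟨L, p, h0, h1, h2, h3⟩ := ih
    rename_i a c _
    refine ⟨L + 1, fun i => Nat.casesOn i a p, rfl, ?_, ?_, ?_⟩
    · rintro (_ | i) hi
      · omega
      · exact h1 i (by omega)
    · rintro (_ | i)
      · change SmallConn δ a (p 0)
        rw [h0]; exact hac.2.2
      · exact h2 i
    · rintro (_ | i)
      · exact hac.1
      · exact h3 i

/-- A finite chain of points from `x` to `y` with consecutive points in small connected sets. -/
def IsCh (ε : ℝ) (x y : X) (p : ℕ → X) (M : ℕ) : Prop :=
  0 < M ∧ p 0 = x ∧ (∀ i, M ≤ i → p i = y) ∧ ∀ i, SmallConn ε (p i) (p (i + 1))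

lemma IsCh.refine [LocallyConnectedSpace X] {ε δ : ℝ} (hε : 0 < ε) (hδ : 0 < δ) {x y : X} {p : ℕ → X} {M : ℕ}
    (h : IsCh ε x y p M) : ∃ q : ℕ → X, ∃ L : ℕ, 0 < L ∧ IsCh δ x y q (M * L) ∧
      ∀ i, dist (q i) (p (i / L)) ≤ ε := by
  obtain ⟨hM, h0, h1, h2⟩ := h
  have : ∃ L : ℕ, 0 < L ∧ ∃ c : ℕ → ℕ → X, ∀ i, c i 0 = p i ∧ c i L = p (i + 1) ∧
      (∀ j, SmallConn δ (c i j) (c i (j + 1))) ∧ ∀ j, dist (c i j) (p i) ≤ ε := by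
    choose l c hc0 hc1 hc2 hc3 using fun i => exists_chain hδ (h2 i)
    refine ⟨(Finset.range M).sup l + 1, by omega, fun i j => if i < M then c i j else y, ?_⟩
    intro i
    by_cases hi : i < M
    · simp only [hi, if_true]
      refine ⟨hc0 i, hc1 i _ ?_, hc2 i, hc3 i⟩
      exact (Finset.le_sup (f := l) (Finset.mem_range.2 hi)).trans (Nat.le_succ _)
    · simp only [hi, if_false]
      rw [h1 i (by omega), h1 (i + 1) (by omega)]
      exact ⟨rfl, rfl, fun _ => SmallConn.refl hδ y, fun _ => by simp [hε.le]⟩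
  obtain ⟨L, hL, c, hc⟩ := this
  refine ⟨fun k => if k < M * L then c (k / L) (k % L) else y, L, hL, ⟨by positivity, ?_, ?_, ?_⟩, ?_⟩
  · have : 0 < M * L := by positivity
    simp [this, (hc 0).1, h0]
  · intro i hi
    simp [not_lt.2 hi]
  · intro k
    have hlt : ∀ k, k < M * L ↔ k / L < M := fun k => by rw [Nat.div_lt_iff_lt_mul hL]
    have hmod := Nat.mod_lt k hL
    have hdm := Nat.div_add_mod k L
    by_cases hk : k < M * L
    · have hk' := (hlt k).1 hk
      by_cases hk1 : k % L + 1 < L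
      · have e1 : (k + 1) / L = k / L := by
          rw [Nat.div_eq_iff hL]
          constructor
          · rw [mul_comm]; omega
          · rw [mul_comm]; omega
        have e2 : (k + 1) % L = k % L + 1 := by
          have := Nat.div_add_mod (k + 1) L
          rw [e1] at this; omega
        have hk2 : k + 1 < M * L := by rw [hlt, e1]; exact hk'
        simp only [hk, hk2, if_true, e1, e2]
        exact (hc _).2.2.1 _
      · have e0 : k + 1 = L * (k / L + 1) := by rw [mul_add]; omega
        have e1 : (k + 1) / L = k / L + 1 := by rw [e0, Nat.mul_div_cancel_left _ hL]
        have e2 : (k + 1) % L = 0 := by rw [e0, Nat.mul_mod_right]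
        have e3 : (if k + 1 < M * L then c ((k + 1) / L) ((k + 1) % L) else y) = c (k / L) (k % L + 1) := by
          have e4 : k % L + 1 = L := by omega
          rw [e4, (hc _).2.1, e1, e2]
          split_ifs with hh
          · exact (hc _).1
          · rw [hlt, e1] at hh
            exact (h1 _ (by omega)).symm
        simp only [hk, if_true]
        rw [e3]
        exact (hc _).2.2.1 _
    · have : ¬ (k + 1 < M * L) := by omega
      simp only [hk, this, if_false]
      exact SmallConn.refl hδ y
  · intro k
    by_cases hk : k < M * L
    · simp only [hk, if_true]
      exact (hc _).2.2.2 _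
    · simp only [hk, if_false]
      rw [h1]
      · simp [hε.le]
      · rw [Nat.le_div_iff_mul_le hL]; omega

lemma floor_close {a b : ℝ} (h : |a - b| < 1) (hab : a ≤ b) : ⌊b⌋₊ = ⌊a⌋₊ ∨ ⌊b⌋₊ = ⌊a⌋₊ + 1 := by
  have h1 : ⌊a⌋₊ ≤ ⌊b⌋₊ := Nat.floor_le_floor hab
  have h2 : ⌊b⌋₊ ≤ ⌊a⌋₊ + 1 := by
    have h3 : b ≤ a + 1 := by rw [abs_lt] at h; linarith
    rcases le_or_gt 0 a with ha | ha
    · rw [← Nat.floor_add_one ha]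
      exact Nat.floor_le_floor h3
    · have : ⌊b⌋₊ ≤ ⌊(1:ℝ)⌋₊ := Nat.floor_le_floor (by linarith)
      rw [Nat.floor_one] at this
      omega
  omega

lemma exists_path_of_smallConn [CompactSpace X] [LocallyConnectedSpace X] {ε : ℝ} (hε : 0 < ε)
    {x y : X} (h : SmallConn (ε / 2) x y) :
    ∃ f : ℝ → X, Continuous f ∧ f 0 = x ∧ f 1 = y ∧ ∀ t, dist (f t) x ≤ 2 * ε := by
  let e : ℕ → ℝ := fun n => ε / 2 / 2 ^ n
  have he : ∀ n, 0 < e n := fun n => by positivity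
  let T : ℕ → Type _ := fun n => {q : (ℕ → X) × ℕ // IsCh (e n) x y q.1 q.2}
  have step : ∀ n (q : T n), ∃ r : T (n + 1), ∃ L : ℕ, 0 < L ∧ r.1.2 = q.1.2 * L ∧
      ∀ i, dist (r.1.1 i) (q.1.1 (i / L)) ≤ e n := by
    intro n q
    obtain ⟨r, L, hL, hr, hd⟩ := q.2.refine (he n) (he (n + 1))
    exact ⟨⟨(r, q.1.2 * L), hr⟩, L, hL, rfl, hd⟩
  choose nx L hL hM hd using step
  let q0 : T 0 := ⟨(fun i => if i = 0 then x else y, 1), by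
    refine ⟨one_pos, rfl, fun i hi => ?_, fun i => ?_⟩
    · have : i ≠ 0 := by simp only at hi; omega
      simp [this]
    · by_cases hi : i = 0
      · simpa [hi, e] using h
      · simpa [hi, e] using SmallConn.refl (by positivity) y⟩
  let q : (n : ℕ) → T n := fun n => Nat.rec q0 nx n
  have hq : ∀ n, q (n + 1) = nx n (q n) := fun n => rfl
  let F : ℕ → ℝ → X := fun n t => (q n).1.1 ⌊t * (q n).1.2⌋₊
  have hF : ∀ t n, dist (F n t) (F (n + 1) t) ≤ ε / 2 / 2 ^ n := by
    intro t n
    rw [dist_comm]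
    have := hd n (q n) ⌊t * (q (n + 1)).1.2⌋₊
    rw [← hq] at this
    convert this using 3
    rw [← Nat.floor_div_natCast, hq, hM]
    have : ((L n (q n) : ℕ) : ℝ) ≠ 0 := by exact_mod_cast (hL n (q n)).ne'
    push_cast
    field_simp
    rfl
  have hlim : ∀ t, ∃ z, Tendsto (fun n => F n t) atTop (𝓝 z) := fun t =>
    cauchySeq_tendsto_of_complete (cauchySeq_of_le_geometric_two (hF t))
  choose f hf using hlim
  have hfd : ∀ t n, dist (F n t) (f t) ≤ ε / 2 ^ n := fun t n =>
    dist_le_of_le_geometric_two_of_tendsto (hF t) (hf t) n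
  have hosc : ∀ n s t, |s - t| * ((q n).1.2 : ℝ) < 1 → s ≤ t → dist (F n s) (F n t) ≤ e n := by
    intro n s t hst hle
    have hMp : (0:ℝ) < (q n).1.2 := by exact_mod_cast (q n).2.1
    have := floor_close (a := s * (q n).1.2) (b := t * (q n).1.2)
      (by rw [← sub_mul, abs_mul, abs_of_pos hMp]; exact hst)
      (by gcongr)
    rcases this with h | h
    · simp only [F, h, dist_self]; exact (he n).le
    · simp only [F, h]
      exact ((q n).2.2.2.2 _).dist_le
  refine ⟨f, ?_, ?_, ?_, ?_⟩
  · rw [Metric.continuous_iff]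
    intro t η hη
    obtain ⟨n, hn⟩ : ∃ n : ℕ, 3 * ε / 2 ^ n < η := by
      have : Tendsto (fun n : ℕ => 3 * ε * (1 / 2 : ℝ) ^ n) atTop (𝓝 (3 * ε * 0)) :=
        (tendsto_pow_atTop_nhds_zero_of_lt_one (by norm_num) (by norm_num)).const_mul _
      rw [mul_zero] at this
      obtain ⟨n, hn⟩ := (this.eventually (gt_mem_nhds hη)).exists
      refine ⟨n, ?_⟩
      rwa [one_div, inv_pow, ← div_eq_mul_inv] at hn
    have hMp : (0:ℝ) < (q n).1.2 := by exact_mod_cast (q n).2.1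
    refine ⟨1 / (q n).1.2, by positivity, fun s hs => ?_⟩
    rw [Real.dist_eq, lt_div_iff₀ hMp] at hs
    have hosc' : dist (F n s) (F n t) ≤ e n := by
      rcases le_total s t with h | h
      · exact hosc n s t hs h
      · rw [dist_comm]; exact hosc n t s (by rwa [abs_sub_comm]) h
    have h1 := hfd s n
    have h2 := hfd t n
    have h3 : e n ≤ ε / 2 ^ n := by
      simp only [e]; gcongr; linarith
    have h4 : 3 * ε / 2 ^ n = ε / 2 ^ n + ε / 2 ^ n + ε / 2 ^ n := by ring
    rw [dist_comm] at h1
    have := dist_triangle4 (f s) (F n s) (F n t) (f t)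
    linarith
  · refine tendsto_nhds_unique (hf 0) ?_
    have : ∀ n, F n 0 = x := fun n => by
      simp only [F, zero_mul, Nat.floor_zero]; exact (q n).2.2.1
    simp [this]
  · refine tendsto_nhds_unique (hf 1) ?_
    have : ∀ n, F n 1 = y := fun n => by
      simp only [F, one_mul, Nat.floor_natCast]; exact (q n).2.2.2.1 _ le_rfl
    simp [this]
  · intro t
    have h1 := hfd t 0
    have h2 : dist (F 0 t) x ≤ ε / 2 := by
      have : F 0 t = if ⌊t * (q 0).1.2⌋₊ = 0 then x else y := rfl
      rw [this]
      split_ifs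
      · simp; positivity
      · exact h.symm.dist_le
    simp only [pow_zero, div_one] at h1
    rw [dist_comm] at h1
    linarith [dist_triangle (f t) (F 0 t) x]

lemma locPathConn (X : Type*) [MetricSpace X] [CompactSpace X] [LocallyConnectedSpace X] :
    LocallyPathConnectedSpace X := by
  rw [locallyPathConnectedSpace_iff_pathComponentIn_mem_nhds]
  intro x u huo hxu
  obtain ⟨ε, hε, hb⟩ := Metric.isOpen_iff.1 huo x hxu
  filter_upwards [SmallConn.eventually (ε := ε / 4 / 2) (by positivity) x] with y hy
  obtain ⟨f, hf, h0, h1, hd⟩ := exists_path_of_smallConn (by positivity) hy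
  refine ⟨⟨⟨fun t => f t, by fun_prop⟩, by simpa using h0, by simpa using h1⟩, fun t => hb ?_⟩
  have := hd t
  change dist (f t) x < ε
  linarith

end PathPart

section ArcPart

variable {X : Type*} [MetricSpace X]

/-- Closed subsets of `[0,1]` such that `f` agrees at the ends of every gap. -/
def Adm (f : ℝ → X) (C : Set ℝ) : Prop :=
  IsClosed C ∧ C ⊆ Icc 0 1 ∧ 0 ∈ C ∧ 1 ∈ C ∧
    ∀ a ∈ C, ∀ b ∈ C, a < b → (∀ c ∈ C, ¬ (a < c ∧ c < b)) → f a = f b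

lemma adm_sInter {f : ℝ → X} (hf : Continuous f) {c : Set (Set ℝ)} (hc : ∀ C ∈ c, Adm f C)
    (hchain : IsChain (· ⊆ ·) c) (hne : c.Nonempty) : Adm f (⋂₀ c) := by
  obtain ⟨C0, hC0⟩ := hne
  refine ⟨isClosed_sInter fun C hC => (hc C hC).1, fun t ht => (hc C0 hC0).2.1 (ht C0 hC0),
    fun C hC => (hc C hC).2.2.1, fun C hC => (hc C hC).2.2.2.1, ?_⟩
  intro a ha b hb hab hgap
  by_contra hne
  have hopen : IsOpen {p : ℝ × ℝ | f p.1 ≠ f p.2} :=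
    isOpen_ne_fun (by fun_prop) (by fun_prop)
  obtain ⟨δ0, hδ0, hball⟩ := Metric.isOpen_iff.1 hopen (a, b) hne
  obtain ⟨δ, hδ, hδ1, hδ2⟩ : ∃ δ > 0, δ < δ0 ∧ δ < (b - a) / 2 := by
    have : 0 < min δ0 ((b - a) / 2) := lt_min hδ0 (by linarith)
    obtain ⟨δ, h1, h2⟩ := exists_between this
    exact ⟨δ, h1, h2.trans_le (min_le_left _ _), h2.trans_le (min_le_right _ _)⟩
  have hex : ∃ C ∈ c, Icc (a + δ) (b - δ) ∩ C = ∅ := by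
    have : Nonempty c := ⟨⟨C0, hC0⟩⟩
    have hemp : Icc (a + δ) (b - δ) ∩ ⋂ C : c, (C : Set ℝ) = ∅ := by
      rw [← sInter_eq_iInter]
      ext t
      simp only [mem_inter_iff, mem_empty_iff_false, iff_false, not_and]
      intro ht htc
      exact hgap t htc ⟨by linarith [ht.1], by linarith [ht.2]⟩
    have hdir : Directed (· ⊇ ·) fun C : c => (C : Set ℝ) := by
      intro C C'
      rcases hchain.total C.2 C'.2 with h | h
      · exact ⟨C, Subset.rfl, h⟩
      · exact ⟨C', h, Subset.rfl⟩
    obtain ⟨i, hi⟩ := isCompact_Icc.elim_directed_family_closed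
      (fun C : c => (C : Set ℝ)) (fun C => (hc C C.2).1) hemp hdir
    exact ⟨i, i.2, hi⟩
  obtain ⟨C, hC, hK⟩ := hex
  have hCc := (hc C hC).1
  obtain ⟨a', ⟨ha'1, ha'2⟩, ha'3⟩ := ((isCompact_Icc (a := a) (b := a + δ)).inter_right hCc).exists_isGreatest
    ⟨a, ⟨le_rfl, by linarith⟩, ha C hC⟩
  obtain ⟨b', ⟨hb'1, hb'2⟩, hb'3⟩ := ((isCompact_Icc (a := b - δ) (b := b)).inter_right hCc).exists_isLeast
    ⟨b, ⟨by linarith, le_rfl⟩, hb C hC⟩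
  have heq : f a' = f b' := by
    refine (hc C hC).2.2.2.2 a' ha'2 b' hb'2 (by linarith [ha'1.2, hb'1.1]) ?_
    rintro t ht ⟨h1, h2⟩
    by_cases h3 : t ≤ a + δ
    · exact absurd (ha'3 ⟨⟨by linarith [ha'1.1], h3⟩, ht⟩) (by linarith)
    by_cases h4 : b - δ ≤ t
    · exact absurd (hb'3 ⟨⟨h4, by linarith [hb'1.2]⟩, ht⟩) (by linarith)
    have : t ∈ Icc (a + δ) (b - δ) ∩ C := ⟨⟨by linarith, by linarith⟩, ht⟩
    rw [hK] at this
    exact this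
  refine hball (a := (a', b')) ?_ heq
  rw [Metric.mem_ball, Prod.dist_eq, max_lt_iff, Real.dist_eq, Real.dist_eq, abs_lt, abs_lt]
  refine ⟨⟨?_, ?_⟩, ⟨?_, ?_⟩⟩ <;> simp only <;> linarith [ha'1.1, ha'1.2, hb'1.1, hb'1.2]

lemma exists_min_adm {f : ℝ → X} (hf : Continuous f) : ∃ C, Adm f C ∧
    ∀ a ∈ C, ∀ b ∈ C, a < b → f a = f b → ∀ c ∈ C, ¬ (a < c ∧ c < b) := by
  have h0 : Adm f (Icc 0 1) := by
    refine ⟨isClosed_Icc, Subset.rfl, by simp, by simp, ?_⟩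
    intro a ha b hb hab hgap
    exfalso
    obtain ⟨t, h1, h2⟩ := exists_between hab
    exact hgap t ⟨by linarith [ha.1], by linarith [hb.2]⟩ ⟨h1, h2⟩
  obtain ⟨C, -, hC, hmin⟩ := zorn_superset_nonempty {C | Adm f C}
    (fun c hc hch hne => ⟨⋂₀ c, adm_sInter hf hc hch hne, fun s hs => sInter_subset_of_mem hs⟩)
    (Icc 0 1) h0
  refine ⟨C, hC, ?_⟩
  intro a ha b hb hab hfab
  have hadm : Adm f (C \ Ioo a b) := by
    obtain ⟨h1, h2, h3, h4, h5⟩ := hC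
    refine ⟨h1.inter isOpen_Ioo.isClosed_compl, fun t ht => h2 ht.1, ⟨h3, ?_⟩, ⟨h4, ?_⟩, ?_⟩
    · intro h; linarith [h.1, (h2 ha).1]
    · intro h; linarith [h.2, (h2 hb).2]
    · rintro c ⟨hc, hc'⟩ d ⟨hd, hd'⟩ hcd hgap
      by_cases hg : ∀ e ∈ C, ¬ (c < e ∧ e < d)
      · exact h5 c hc d hd hcd hg
      push Not at hg
      obtain ⟨e, he, hce, hed⟩ := hg
      have heab : e ∈ Ioo a b := by
        by_contra hh
        exact hgap e ⟨he, hh⟩ ⟨hce, hed⟩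
      have hca : c ≤ a := by
        by_contra hh
        exact hc' ⟨by linarith, by linarith [heab.2]⟩
      have hdb : b ≤ d := by
        by_contra hh
        exact hd' ⟨by linarith [heab.1], by linarith⟩
      have hac : a ≤ c := by
        by_contra hh
        exact hgap a ⟨ha, fun h => lt_irrefl _ h.1⟩ ⟨by linarith, by linarith [heab.1]⟩
      have hbd : d ≤ b := by
        by_contra hh
        exact hgap b ⟨hb, fun h => lt_irrefl _ h.2⟩ ⟨by linarith [heab.2], by linarith⟩
      rw [le_antisymm hca hac, le_antisymm hbd hdb, hfab]
  have := hmin hadm sdiff_subset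
  intro c hc h
  exact (this hc).2 h

lemma infDist_le_add {y : X} {A B : Set X} {ε : ℝ} (hB : B.Nonempty)
    (h : ∀ b ∈ B, ∃ a ∈ A, dist b a ≤ ε) : Metric.infDist y A ≤ Metric.infDist y B + ε := by
  rw [← sub_le_iff_le_add]
  rw [Metric.le_infDist hB]
  intro b hb
  obtain ⟨a, ha, hab⟩ := h b hb
  have := Metric.infDist_le_dist_of_mem (x := y) ha
  linarith [dist_triangle y b a]

lemma exists_param_s3 [CompactSpace X] {f : ℝ → X} (hf : Continuous f) (hne : f 0 ≠ f 1)
    {C : Set ℝ} (hC : Adm f C)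
    (hmin : ∀ a ∈ C, ∀ b ∈ C, a < b → f a = f b → ∀ c ∈ C, ¬ (a < c ∧ c < b)) :
    ∃ φ : ℝ → ℝ, ContinuousOn φ C ∧ φ 0 = 0 ∧ φ 1 = 1 ∧
      (∀ s ∈ C, ∀ t ∈ C, s ≤ t → φ s ≤ φ t) ∧ ∀ s ∈ C, ∀ t ∈ C, φ s = φ t ↔ f s = f t := by
  obtain ⟨hCc, hC01, h0, h1, hgap⟩ := hC
  have : Nonempty X := ⟨f 0⟩
  let y : ℕ → X := TopologicalSpace.denseSeq X
  let K : ℝ → Set X := fun t => f '' (C ∩ Iic t)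
  have hmem : ∀ t ∈ C, f t ∈ K t := fun t ht => ⟨t, ⟨ht, self_mem_Iic⟩, rfl⟩
  have hKmono : ∀ s t, s ≤ t → K s ⊆ K t := fun s t hst =>
    image_mono (inter_subset_inter_right _ (Iic_subset_Iic.2 hst))
  let g : ℕ → ℝ → ℝ := fun n t => (1 / 2 : ℝ) ^ n * Metric.infDist (y n) (K t)
  let D := Metric.diam (univ : Set X)
  have hgb : ∀ n, ∀ t ∈ C, ‖g n t‖ ≤ (1 / 2 : ℝ) ^ n * D := by
    intro n t ht
    simp only [g]
    rw [Real.norm_of_nonneg (mul_nonneg (by positivity) Metric.infDist_nonneg)]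
    gcongr
    exact (Metric.infDist_le_dist_of_mem (hmem t ht)).trans
      (Metric.dist_le_diam_of_mem isCompact_univ.isBounded (mem_univ _) (mem_univ _))
  have hsum : Summable fun n : ℕ => (1 / 2 : ℝ) ^ n * D := summable_geometric_two.mul_right D
  have hgs : ∀ t ∈ C, Summable fun n => g n t := fun t ht =>
    Summable.of_norm_bounded hsum fun n => hgb n t ht
  have hganti : ∀ n, ∀ s ∈ C, ∀ t, s ≤ t → g n t ≤ g n s := by
    intro n s hs t hst
    simp only [g]
    gcongr
    exact Metric.infDist_le_infDist_of_subset (hKmono s t hst) ⟨_, hmem s hs⟩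
  have hgc : ∀ n, ContinuousOn (g n) C := by
    intro n
    refine continuousOn_const.mul ?_
    rw [Metric.continuousOn_iff]
    intro t ht ε hε
    obtain ⟨δ, hδ, hδf⟩ := Metric.continuous_iff.1 hf t (ε / 4) (by positivity)
    refine ⟨δ, hδ, fun s hs hst => ?_⟩
    -- symmetric estimate
    have key : ∀ s' ∈ C, ∀ t' ∈ C, s' ≤ t' → (∀ u, s' ≤ u → u ≤ t' → dist u t < δ) →
        dist (Metric.infDist (y n) (K s')) (Metric.infDist (y n) (K t')) < ε := by
      intro s' hs' t' ht' hle hu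
      have h1 : Metric.infDist (y n) (K t') ≤ Metric.infDist (y n) (K s') :=
        Metric.infDist_le_infDist_of_subset (hKmono _ _ hle) ⟨_, hmem s' hs'⟩
      have h2 : Metric.infDist (y n) (K s') ≤ Metric.infDist (y n) (K t') + ε / 2 := by
        refine infDist_le_add ⟨_, hmem t' ht'⟩ ?_
        rintro _ ⟨u, ⟨huC, hut⟩, rfl⟩
        by_cases hus : u ≤ s'
        · exact ⟨f u, ⟨u, ⟨huC, hus⟩, rfl⟩, by simp; positivity⟩
        · refine ⟨f s', hmem s' hs', ?_⟩
          have e1 := hδf u (hu u (by linarith) hut)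
          have e2 := hδf s' (hu s' le_rfl hle)
          rw [dist_comm] at e2
          linarith [dist_triangle (f u) (f t) (f s')]
      rw [Real.dist_eq, abs_lt]
      constructor <;> linarith
    rw [Real.dist_eq, abs_lt] at hst
    rcases le_total s t with h | h
    · refine key s hs t ht h fun u hu1 hu2 => ?_
      rw [Real.dist_eq, abs_lt]
      constructor <;> linarith
    · rw [dist_comm]
      refine key t ht s hs h fun u hu1 hu2 => ?_
      rw [Real.dist_eq, abs_lt]
      constructor <;> linarith
  let ψ : ℝ → ℝ := fun t => ∑' n, g n t
  have hψc : ContinuousOn ψ C := continuousOn_tsum hgc hsum hgb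
  have hψanti : ∀ s ∈ C, ∀ t ∈ C, s ≤ t → ψ t ≤ ψ s := fun s hs t ht hst =>
    (hgs t ht).tsum_le_tsum (fun n => hganti n s hs t hst) (hgs s hs)
  have hψeq : ∀ s ∈ C, ∀ t ∈ C, s < t → f s = f t → ψ s = ψ t := by
    intro s hs t ht hst hfst
    have : K s = K t := by
      refine (hKmono s t hst.le).antisymm ?_
      rintro _ ⟨u, ⟨huC, hut⟩, rfl⟩
      by_cases hus : u ≤ s
      · exact ⟨u, ⟨huC, hus⟩, rfl⟩
      · have hut' : u = t := by
          by_contra hh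
          exact hmin s hs t ht hst hfst u huC ⟨by linarith, lt_of_le_of_ne hut hh⟩
        exact ⟨s, ⟨hs, self_mem_Iic⟩, by rw [hfst, hut']⟩
    simp only [ψ, g, this]
  have hψlt : ∀ s ∈ C, ∀ t ∈ C, s < t → f s ≠ f t → ψ t < ψ s := by
    intro s hs t ht hst hfst
    have hnot : f t ∉ K s := by
      rintro ⟨u, ⟨huC, hus⟩, hu⟩
      rcases eq_or_lt_of_le (mem_Iic.1 hus) with h | h
      · exact hfst (h ▸ hu)
      · exact hmin u huC t ht (lt_of_le_of_lt hus hst) hu s hs ⟨h, hst⟩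
    have hKc : IsClosed (K s) :=
      ((isCompact_Icc.of_isClosed_subset hCc hC01).inter_right isClosed_Iic |>.image hf).isClosed
    have hr : 0 < Metric.infDist (f t) (K s) :=
      (hKc.notMem_iff_infDist_pos ⟨_, hmem s hs⟩).1 hnot
    obtain ⟨n, hn⟩ := (TopologicalSpace.denseRange_denseSeq X).exists_dist_lt (f t) (half_pos hr)
    refine (hgs t ht).tsum_lt_tsum (i := n) (fun n => hganti n s hs t hst.le) ?_ (hgs s hs)
    simp only [g]
    have e1 : Metric.infDist (y n) (K t) ≤ dist (y n) (f t) :=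
      Metric.infDist_le_dist_of_mem (hmem t ht)
    have e2 : Metric.infDist (f t) (K s) ≤ Metric.infDist (y n) (K s) + dist (f t) (y n) :=
      Metric.infDist_le_infDist_add_dist
    rw [dist_comm] at e1
    have e3 : dist (f t) (y n) < Metric.infDist (f t) (K s) / 2 := hn
    gcongr
    linarith
  have hψ01 : ψ 1 < ψ 0 := hψlt 0 h0 1 h1 one_pos hne
  have hpos : 0 < ψ 0 - ψ 1 := by linarith
  refine ⟨fun t => (ψ 0 - ψ t) / (ψ 0 - ψ 1), (continuousOn_const.sub hψc).div_const _, by simp,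
    div_self hpos.ne', ?_, ?_⟩
  · intro s hs t ht hst
    have := hψanti s hs t ht hst
    simp only
    gcongr
  · intro s hs t ht
    have e : (ψ 0 - ψ s) / (ψ 0 - ψ 1) = (ψ 0 - ψ t) / (ψ 0 - ψ 1) ↔ ψ s = ψ t := by
      rw [div_left_inj' hpos.ne', sub_right_inj]
    simp only
    rw [e]
    rcases lt_trichotomy s t with h | h | h
    · refine ⟨fun he => ?_, hψeq s hs t ht h⟩
      by_contra hh
      exact (hψlt s hs t ht h hh).ne he.symm
    · simp [h]
    · refine ⟨fun he => ?_, fun he => (hψeq t ht s hs h he.symm).symm⟩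
      by_contra hh
      exact (hψlt t ht s hs h (Ne.symm hh)).ne he

lemma exists_arc [CompactSpace X] {f : ℝ → X} (hf : Continuous f) (hne : f 0 ≠ f 1) :
    ∃ γ : ℝ → X, ContinuousOn γ (Icc 0 1) ∧ InjOn γ (Icc 0 1) ∧ γ 0 = f 0 ∧ γ 1 = f 1 ∧
      ∀ t ∈ Icc (0:ℝ) 1, γ t ∈ f '' Icc 0 1 := by
  obtain ⟨C, hC, hmin⟩ := exists_min_adm hf
  obtain ⟨φ, hφc, hφ0, hφ1, hφm, hφf⟩ := exists_param_s3 hf hne hC hmin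
  obtain ⟨hCc, hC01, h0, h1, hgap⟩ := hC
  have hCk : IsCompact C := isCompact_Icc.of_isClosed_subset hCc hC01
  have hsurj : ∀ s ∈ Icc (0:ℝ) 1, ∃ t ∈ C, φ t = s := by
    intro s hs
    by_contra hno
    push Not at hno
    have hs0 : 0 < s := lt_of_le_of_ne hs.1 (fun h => hno 0 h0 (hφ0.trans h))
    have hs1 : s < 1 := lt_of_le_of_ne hs.2 (fun h => hno 1 h1 (hφ1.trans h.symm))
    have hA : IsCompact (C ∩ φ ⁻¹' Iic s) :=
      hCk.of_isClosed_subset (hφc.preimage_isClosed_of_isClosed hCc isClosed_Iic) inter_subset_left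
    have hB : IsCompact (C ∩ φ ⁻¹' Ici s) :=
      hCk.of_isClosed_subset (hφc.preimage_isClosed_of_isClosed hCc isClosed_Ici) inter_subset_left
    obtain ⟨a, ⟨haC, ha⟩, ha'⟩ := hA.exists_isGreatest ⟨0, h0, by simp [hφ0, hs0.le]⟩
    obtain ⟨b, ⟨hbC, hb⟩, hb'⟩ := hB.exists_isLeast ⟨1, h1, by simp [hφ1, hs1.le]⟩
    have ha2 : φ a < s := lt_of_le_of_ne ha (hno a haC)
    have hb2 : s < φ b := lt_of_le_of_ne hb (hno b hbC).symm
    have hab : a < b := by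
      by_contra hh
      have := hφm b hbC a haC (by linarith)
      linarith
    have := hgap a haC b hbC hab (by
      rintro c hc ⟨h1, h2⟩
      rcases le_total (φ c) s with h | h
      · exact absurd (ha' ⟨hc, h⟩) (by linarith)
      · exact absurd (hb' ⟨hc, h⟩) (by linarith))
    have := (hφf a haC b hbC).2 this
    linarith
  choose! g hgC hg using hsurj
  refine ⟨fun s => f (g s), ?_, ?_, ?_, ?_, ?_⟩
  · rw [continuousOn_iff_isClosed]
    intro Z hZ
    refine ⟨φ '' (C ∩ f ⁻¹' Z), ((hCk.inter_right (hZ.preimage hf)).image_of_continuousOn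
      (hφc.mono inter_subset_left)).isClosed, ?_⟩
    ext s
    constructor
    · rintro ⟨hs, hs1⟩
      exact ⟨⟨g s, ⟨hgC s hs1, hs⟩, hg s hs1⟩, hs1⟩
    · rintro ⟨⟨u, ⟨huC, hu⟩, rfl⟩, hs1⟩
      refine ⟨?_, hs1⟩
      have := (hφf _ (hgC _ hs1) u huC).1 (hg _ hs1)
      change f (g (φ u)) ∈ Z
      rw [this]; exact hu
  · intro s hs t ht hst
    have := (hφf _ (hgC s hs) _ (hgC t ht)).2 hst
    rwa [hg s hs, hg t ht] at this
  · have h : (0:ℝ) ∈ Icc (0:ℝ) 1 := by simp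
    exact (hφf _ (hgC 0 h) _ h0).1 (by rw [hg 0 h, hφ0])
  · have h : (1:ℝ) ∈ Icc (0:ℝ) 1 := by simp
    exact (hφf _ (hgC 1 h) _ h1).1 (by rw [hg 1 h, hφ1])
  · intro t ht
    exact ⟨g t, hC01 (hgC t ht), rfl⟩

end ArcPart

section CirclePart

variable {X : Type*} [MetricSpace X]

lemma circle_of_loop {f : ℝ → X} (hf : ContinuousOn f (Icc 0 2)) (h02 : f 0 = f 2)
    (hinj : InjOn f (Ico 0 2)) : ∃ f : Circle → X, Continuous f ∧ Topology.IsEmbedding f := by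
  have hpi := Real.pi_pos
  have : Fact (0 < 2 * Real.pi) := ⟨by positivity⟩
  let g : ℝ → X := fun t => f (t / Real.pi)
  let G : AddCircle (2 * Real.pi) → X := AddCircle.liftIco (2 * Real.pi) 0 g
  have hG : Continuous G := by
    apply AddCircle.liftIco_zero_continuous
    · simp only [g, zero_div]
      rw [h02]; congr 1; field_simp
    · refine hf.comp (by fun_prop) fun t ht => ⟨div_nonneg ht.1 hpi.le, ?_⟩
      rw [div_le_iff₀ hpi]; exact ht.2
  have hGi : Function.Injective G := by
    intro a b hab
    obtain ⟨s, hs, rfl⟩ := AddCircle.coe_image_Ico_eq (2 * Real.pi) 0 ▸ mem_univ a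
    obtain ⟨t, ht, rfl⟩ := AddCircle.coe_image_Ico_eq (2 * Real.pi) 0 ▸ mem_univ b
    simp only [G] at hab
    rw [AddCircle.liftIco_coe_apply hs, AddCircle.liftIco_coe_apply ht] at hab
    rw [zero_add] at hs ht
    have := hinj ⟨div_nonneg hs.1 hpi.le, by rw [div_lt_iff₀ hpi]; exact hs.2⟩
      ⟨div_nonneg ht.1 hpi.le, by rw [div_lt_iff₀ hpi]; exact ht.2⟩ hab
    rw [div_left_inj' hpi.ne'] at this
    rw [this]
  have hc : Continuous (G ∘ AddCircle.homeomorphCircle'.symm) :=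
    hG.comp (Homeomorph.continuous _)
  exact ⟨_, hc, (hc.isClosedEmbedding
    (hGi.comp (Homeomorph.injective _))).isEmbedding⟩

lemma circle_of_two_arcs {α β : ℝ → X} (hα : ContinuousOn α (Icc 0 1)) (hβ : ContinuousOn β (Icc 0 1))
    (hαi : InjOn α (Icc 0 1)) (hβi : InjOn β (Icc 0 1)) (h0 : α 0 = β 0) (h1 : α 1 = β 1)
    (hmid : ∀ t ∈ Icc (0:ℝ) 1, α (1 / 2) ≠ β t) :
    ∃ f : Circle → X, Continuous f ∧ Topology.IsEmbedding f := by
  have z0 : (0:ℝ) ∈ Icc (0:ℝ) 1 := by simp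
  have z1 : (1:ℝ) ∈ Icc (0:ℝ) 1 := by simp
  have hBc : IsClosed (β '' Icc 0 1) := (isCompact_Icc.image_of_continuousOn hβ).isClosed
  have hS : IsCompact (Icc 0 1 ∩ α ⁻¹' (β '' Icc 0 1)) :=
    isCompact_Icc.of_isClosed_subset (hα.preimage_isClosed_of_isClosed isClosed_Icc hBc)
      inter_subset_left
  obtain ⟨a, ⟨⟨ha, s0, hs0, hs0'⟩, ha2⟩, ha'⟩ := (hS.inter_right (isClosed_Iic (a := (1 / 2 : ℝ)))).exists_isGreatest
    ⟨0, ⟨z0, ⟨0, z0, h0.symm⟩⟩, by norm_num⟩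
  obtain ⟨b, ⟨⟨hb, s1, hs1, hs1'⟩, hb2⟩, hb'⟩ := (hS.inter_right (isClosed_Ici (a := (1 / 2 : ℝ)))).exists_isLeast
    ⟨1, ⟨z1, ⟨1, z1, h1.symm⟩⟩, by norm_num⟩
  have ha3 : a < 1 / 2 := lt_of_le_of_ne ha2 (by rintro rfl; exact hmid s0 hs0 hs0'.symm)
  have hb3 : 1 / 2 < b := lt_of_le_of_ne hb2 (by rintro rfl; exact hmid s1 hs1 hs1'.symm)
  have hbet : ∀ t, a < t → t < b → ∀ s ∈ Icc (0:ℝ) 1, α t ≠ β s := by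
    intro t hat htb s hs h
    have htI : t ∈ Icc (0:ℝ) 1 := ⟨by linarith [ha.1], by linarith [hb.2]⟩
    rcases le_total t (1 / 2) with h' | h'
    · exact absurd (ha' ⟨⟨htI, ⟨s, hs, h.symm⟩⟩, h'⟩) (by linarith)
    · exact absurd (hb' ⟨⟨htI, ⟨s, hs, h.symm⟩⟩, h'⟩) (by linarith)
  have hs01 : s0 ≠ s1 := by
    rintro rfl
    have := hαi ha hb (hs0'.symm.trans hs1')
    linarith
  let A : ℝ → ℝ := fun t => a + t * (b - a)
  let B : ℝ → ℝ := fun t => s1 + (t - 1) * (s0 - s1)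
  have hA : ∀ t ∈ Icc (0:ℝ) 1, A t ∈ Icc a b := by
    rintro t ⟨h1, h2⟩
    constructor <;> simp only [A] <;> nlinarith
  have hA1 : ∀ t ∈ Icc (0:ℝ) 1, A t ∈ Icc (0:ℝ) 1 := fun t ht =>
    ⟨ha.1.trans (hA t ht).1, (hA t ht).2.trans hb.2⟩
  have hB1 : ∀ t ∈ Icc (1:ℝ) 2, B t ∈ Icc (0:ℝ) 1 := by
    rintro t ⟨h1, h2⟩
    have e : B t = (2 - t) * s1 + (t - 1) * s0 := by simp only [B]; ring
    rw [e]
    constructor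
    · have := mul_nonneg (sub_nonneg.2 h2) hs1.1
      have := mul_nonneg (sub_nonneg.2 h1) hs0.1
      linarith
    · have := mul_le_mul_of_nonneg_left hs1.2 (sub_nonneg.2 h2)
      have := mul_le_mul_of_nonneg_left hs0.2 (sub_nonneg.2 h1)
      linarith
  have hA0' : A 0 = a := by simp [A]
  have hA1' : A 1 = b := by simp [A]
  have hB1' : B 1 = s1 := by simp [B]
  have hB2' : B 2 = s0 := by simp only [B]; ring
  have hAi : ∀ s t, A s = A t → s = t := by
    intro s t h
    have h' : (s - t) * (b - a) = 0 := by simp only [A] at h; linarith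
    rcases mul_eq_zero.1 h' with h | h <;> linarith
  have hBi : ∀ s t, B s = B t → s = t := by
    intro s t h
    have h' : (s - t) * (s0 - s1) = 0 := by simp only [B] at h; linarith
    rcases mul_eq_zero.1 h' with h | h
    · linarith
    · exact absurd (sub_eq_zero.1 h) hs01
  have hcross : ∀ s ∈ Icc (0:ℝ) 1, ∀ t, 1 < t → t < 2 → α (A s) ≠ β (B t) := by
    intro s hs t ht1 ht2 h
    have hBt := hB1 t ⟨ht1.le, ht2.le⟩
    rcases eq_or_lt_of_le (hA s hs).1 with h' | h'
    · rw [← h', ← hs0'] at h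
      have := hβi hs0 hBt h
      rw [← hB2'] at this
      have := hBi _ _ this
      linarith
    rcases eq_or_lt_of_le (hA s hs).2 with h'' | h''
    · rw [h'', ← hs1'] at h
      have := hβi hs1 hBt h
      rw [← hB1'] at this
      have := hBi _ _ this
      linarith
    · exact hbet _ h' h'' _ hBt h
  refine circle_of_loop (f := fun t => if t ≤ 1 then α (A t) else β (B t)) ?_ ?_ ?_
  · have e : Icc (0:ℝ) 2 = Icc 0 1 ∪ Icc 1 2 := (Icc_union_Icc_eq_Icc (by norm_num) (by norm_num)).symm
    rw [e]
    refine ContinuousOn.union_of_isClosed ?_ ?_ isClosed_Icc isClosed_Icc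
    · refine (hα.comp (f := A) (by fun_prop) hA1).congr fun t ht => ?_
      simp [ht.2]
    · refine (hβ.comp (f := B) (by fun_prop) hB1).congr fun t ht => ?_
      by_cases h : t ≤ 1
      · have : t = 1 := le_antisymm h ht.1
        subst this
        simp [hA1', hB1', hs1']
      · simp [h]
  · simp only [zero_le_one, if_true]
    rw [if_neg (by norm_num), hA0', hB2', hs0']
  · rintro s ⟨hs1, hs2⟩ t ⟨ht1, ht2⟩ h
    simp only at h
    split_ifs at h with h1 h2 h2
    · exact hAi _ _ (hαi (hA1 s ⟨hs1, h1⟩) (hA1 t ⟨ht1, h2⟩) h)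
    · exact absurd h (hcross s ⟨hs1, h1⟩ t (by linarith) ht2)
    · exact absurd h.symm (hcross t ⟨ht1, h2⟩ s (by linarith) hs2)
    · exact hBi _ _ (hβi (hB1 s ⟨by linarith, hs2.le⟩) (hB1 t ⟨by linarith, ht2.le⟩) h)

lemma exists_arc_in [CompactSpace X] [LocallyConnectedSpace X] {U : Set X} (hU : IsOpen U) {x y : X}
    (hxy : x ≠ y) (hx : x ∈ U) (hy : y ∈ connectedComponentIn U x) :
    ∃ γ : ℝ → X, ContinuousOn γ (Icc 0 1) ∧ InjOn γ (Icc 0 1) ∧ γ 0 = x ∧ γ 1 = y ∧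
      ∀ t ∈ Icc (0:ℝ) 1, γ t ∈ U := by
  have := locPathConn X
  have hpc : IsPathConnected (connectedComponentIn U x) :=
    (hU.connectedComponentIn.isConnected_iff_isPathConnected).1
      (isConnected_connectedComponentIn_iff.2 hx)
  obtain ⟨p, hp⟩ := hpc.joinedIn x (mem_connectedComponentIn hx) y hy
  have hp0 : p.extend 0 = x := p.extend_zero
  have hp1 : p.extend 1 = y := p.extend_one
  obtain ⟨γ, h1, h2, h3, h4, h5⟩ := exists_arc (f := p.extend) p.continuous_extend
    (by rw [hp0, hp1]; exact hxy)
  refine ⟨γ, h1, h2, h3.trans hp0, h4.trans hp1, fun t ht => ?_⟩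
  obtain ⟨s, hs, hs'⟩ := h5 t ht
  rw [← hs', p.extend_apply hs]
  exact connectedComponentIn_subset _ _ (hp _)

lemma separate_comp [LocallyConnectedSpace X] {U : Set X} (hU : IsOpen U) (hfin : Uᶜ.Finite)
    {x y : X} (hx : x ∈ U) (hyU : y ∈ U) (hy : y ∉ connectedComponentIn U x) :
    ∃ A : Set X, IsOpen A ∧ x ∈ A ∧ y ∉ closure A ∧ (frontier A).Finite := by
  have hdis : ∀ z ∈ U, z ∉ connectedComponentIn U x → z ∉ closure (connectedComponentIn U x) := by
    intro z hz hzx hcl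
    obtain ⟨w, hw1, hw2⟩ := mem_closure_iff.1 hcl (connectedComponentIn U z)
      hU.connectedComponentIn (mem_connectedComponentIn hz)
    apply hzx
    rw [connectedComponentIn_eq hw2, ← connectedComponentIn_eq hw1]
    exact mem_connectedComponentIn hz
  refine ⟨connectedComponentIn U x, hU.connectedComponentIn, mem_connectedComponentIn hx,
    hdis y hyU hy, hfin.subset ?_⟩
  intro z hz hzU
  rw [hU.connectedComponentIn.frontier_eq] at hz
  exact hdis z hzU hz.2 hz.1

lemma separate [CompactSpace X] [LocallyConnectedSpace X]
    (hno : ¬ ∃ f : Circle → X, Continuous f ∧ Topology.IsEmbedding f) {x y : X} (hxy : x ≠ y) :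
    ∃ A : Set X, IsOpen A ∧ x ∈ A ∧ y ∉ closure A ∧ (frontier A).Finite := by
  by_cases h : y ∈ connectedComponentIn univ x
  swap
  · exact separate_comp isOpen_univ (by simp) (mem_univ _) (mem_univ _) h
  obtain ⟨α, hα, hαi, hα0, hα1, -⟩ := exists_arc_in isOpen_univ hxy (mem_univ x) h
  have z0 : (0:ℝ) ∈ Icc (0:ℝ) 1 := by simp
  have z1 : (1:ℝ) ∈ Icc (0:ℝ) 1 := by simp
  have z2 : (1/2:ℝ) ∈ Icc (0:ℝ) 1 := by constructor <;> norm_num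
  have hx : x ∈ ({α (1 / 2)}ᶜ : Set X) := by
    intro h
    have := hαi z0 z2 (hα0.trans h)
    norm_num at this
  have hy : y ∈ ({α (1 / 2)}ᶜ : Set X) := by
    intro h
    have := hαi z1 z2 (hα1.trans h)
    norm_num at this
  by_cases h' : y ∈ connectedComponentIn {α (1 / 2)}ᶜ x
  swap
  · exact separate_comp isOpen_compl_singleton (by simp) hx hy h'
  obtain ⟨β, hβ, hβi, hβ0, hβ1, hβm⟩ := exists_arc_in isOpen_compl_singleton hxy hx h'
  exact absurd (circle_of_two_arcs hα hβ hαi hβi (hα0.trans hβ0.symm) (hα1.trans hβ1.symm)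
    fun t ht he => hβm t ht he.symm) hno

lemma small_nhd [CompactSpace X] (hsep : ∀ x y : X, x ≠ y →
    ∃ A : Set X, IsOpen A ∧ x ∈ A ∧ y ∉ closure A ∧ (frontier A).Finite)
    {x : X} {u : Set X} (hu : IsOpen u) (hx : x ∈ u) :
    ∃ A : Set X, IsOpen A ∧ x ∈ A ∧ A ⊆ u ∧ (frontier A).Finite := by
  have : ∃ A : Set X, IsOpen A ∧ x ∈ A ∧ (frontier A).Finite ∧ Disjoint A uᶜ := by
    refine (hu.isClosed_compl.isCompact).induction_on
      (p := fun S => ∃ A : Set X, IsOpen A ∧ x ∈ A ∧ (frontier A).Finite ∧ Disjoint A S) ?_ ?_ ?_ ?_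
    · exact ⟨univ, isOpen_univ, mem_univ _, by simp, by simp⟩
    · rintro s t hst ⟨A, h1, h2, h3, h4⟩
      exact ⟨A, h1, h2, h3, h4.mono_right hst⟩
    · rintro s t ⟨A, h1, h2, h3, h4⟩ ⟨B, g1, g2, g3, g4⟩
      refine ⟨A ∩ B, h1.inter g1, ⟨h2, g2⟩, (h3.union g3).subset ?_, ?_⟩
      · refine (frontier_inter_subset A B).trans ?_
        exact union_subset_union inter_subset_left inter_subset_right
      · rw [disjoint_union_right]
        exact ⟨h4.mono_left inter_subset_left, g4.mono_left inter_subset_right⟩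
    · intro y hy
      obtain ⟨A, h1, h2, h3, h4⟩ := hsep x y (by rintro rfl; exact hy hx)
      refine ⟨(closure A)ᶜ, mem_nhdsWithin_of_mem_nhds (isClosed_closure.isOpen_compl.mem_nhds h3),
        A, h1, h2, h4, ?_⟩
      exact disjoint_compl_right.mono_left subset_closure
  obtain ⟨A, h1, h2, h3, h4⟩ := this
  exact ⟨A, h1, h2, disjoint_compl_right_iff_subset.1 h4, h3⟩

lemma covDim_of_rimFinite [CompactSpace X] (hloc : ∀ (x : X) (u : Set X), IsOpen u → x ∈ u →
    ∃ A : Set X, IsOpen A ∧ x ∈ A ∧ A ⊆ u ∧ (frontier A).Finite) : CovDimLE X 1 := by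
  intro U hUf hUo hUc
  have hmem : ∀ x : X, ∃ u ∈ U, x ∈ u := fun x => by
    have := mem_univ x
    rw [← hUc] at this
    exact this
  choose u huU hxu using hmem
  choose A hAo hxA hAu hAf using fun x => hloc x (u x) (hUo _ (huU x)) (hxu x)
  obtain ⟨t, ht⟩ := isCompact_univ.elim_finite_subcover A hAo
    (fun x _ => mem_iUnion.2 ⟨x, hxA x⟩)
  let n := t.card
  let e : Fin n ≃ t := t.equivFin.symm
  let V : Fin n → Set X := fun i => A (e i)
  have hVcov : ∀ x, ∃ i, x ∈ V i := by
    intro x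
    obtain ⟨z, hz, hxz⟩ := mem_iUnion₂.1 (ht (mem_univ x))
    exact ⟨e.symm ⟨z, hz⟩, by simpa [V] using hxz⟩
  let F : Set X := ⋃ i, frontier (V i)
  have hF : F.Finite := finite_iUnion fun i => hAf _
  obtain ⟨O, hO, hOd⟩ := hF.t2_separation
  let W : Fin n → Set X := fun i => V i \ ⋃ j : {j : Fin n // j < i}, closure (V j)
  have hWo : ∀ i, IsOpen (W i) := fun i =>
    (hAo _).sdiff (isClosed_iUnion_of_finite fun _ => isClosed_closure)
  have hWd : ∀ i j x, x ∈ W i → x ∈ W j → i = j := by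
    have key : ∀ i j x, i < j → x ∈ W i → x ∉ W j := by
      intro i j x hij hi hj
      exact hj.2 (mem_iUnion.2 ⟨⟨i, hij⟩, subset_closure hi.1⟩)
    intro i j x hi hj
    rcases lt_trichotomy i j with h | h | h
    · exact absurd hj (key i j x h hi)
    · exact h
    · exact absurd hi (key j i x h hj)
  let P : X → Set X := fun p => O p ∩ u p
  refine ⟨range W ∪ P '' F, (finite_range W).union (hF.image P), ?_, ?_, ?_, ?_⟩
  · rintro v (⟨i, rfl⟩ | ⟨p, hp, rfl⟩)
    · exact hWo i
    · exact (hO p).2.inter (hUo _ (huU p))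
  · refine eq_univ_of_forall fun x => ?_
    by_cases hx : x ∈ F
    · exact ⟨P x, Or.inr ⟨x, hx, rfl⟩, (hO x).1, hxu x⟩
    · obtain ⟨i, hi, hmin⟩ := WellFounded.has_min (wellFounded_lt (α := Fin n)) {i | x ∈ V i} (hVcov x)
      refine ⟨W i, Or.inl ⟨i, rfl⟩, hi, ?_⟩
      rintro hcl
      obtain ⟨⟨j, hj⟩, hxj⟩ := mem_iUnion.1 hcl
      have hxj' : x ∉ V j := fun h => hmin j h hj
      apply hx
      refine mem_iUnion.2 ⟨j, ?_⟩
      rw [(hAo _ : IsOpen (V j)).frontier_eq]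
      exact ⟨hxj, hxj'⟩
  · rintro v (⟨i, rfl⟩ | ⟨p, hp, rfl⟩)
    · exact ⟨u (e i), huU _, sdiff_subset.trans (hAu _)⟩
    · exact ⟨u p, huU p, inter_subset_right⟩
  · intro x
    have hsub : {v ∈ range W ∪ P '' F | x ∈ v} ⊆ {v ∈ range W | x ∈ v} ∪ {v ∈ P '' F | x ∈ v} := by
      rintro v ⟨h | h, hx⟩
      · exact Or.inl ⟨h, hx⟩
      · exact Or.inr ⟨h, hx⟩
    have f1 : {v ∈ range W | x ∈ v}.Finite := (finite_range W).subset (sep_subset _ _)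
    have f2 : {v ∈ P '' F | x ∈ v}.Finite := (hF.image P).subset (sep_subset _ _)
    have c1 : {v ∈ range W | x ∈ v}.ncard ≤ 1 := by
      rw [ncard_le_one f1]
      rintro _ ⟨⟨i, rfl⟩, hi⟩ _ ⟨⟨j, rfl⟩, hj⟩
      rw [hWd i j x hi hj]
    have c2 : {v ∈ P '' F | x ∈ v}.ncard ≤ 1 := by
      rw [ncard_le_one f2]
      rintro _ ⟨⟨p, hp, rfl⟩, hi⟩ _ ⟨⟨q, hq, rfl⟩, hj⟩
      by_contra hne
      have hpq : p ≠ q := fun h => hne (by rw [h])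
      exact (disjoint_left.1 (hOd hp hq hpq)) hi.1 hj.1
    calc _ ≤ _ := ncard_le_ncard hsub (f1.union f2)
      _ ≤ _ := ncard_union_le _ _
      _ ≤ 1 + 1 := add_le_add c1 c2

end CirclePart

/-- A compact, locally connected metric space of covering dimension at least two
contains a topologically embedded circle. -/
theorem stmt_3 {X : Type} [MetricSpace X] [CompactSpace X] [LocallyConnectedSpace X]
    (hdim : ¬ CovDimLE X 1) :
    ∃ f : Circle → X, Continuous f ∧ Topology.IsEmbedding f := by
  by_contra hno
  exact hdim (covDim_of_rimFinite fun x u hu hx =>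
    small_nhd (fun x y hxy => separate hno hxy) hu hx)
end

section
/- Let X be a compact metric space with dim(X) ≥ 2 whose every closed neighborhood of some point also has dimension ≥ 2. Then there exists a point x₀ ∈ X and a sequence of embeddings φ_k : S¹ → X such that the images φ_k(S¹) are contained in the closed balls of radius 1/k around x₀, provided every positive-dimensional closed ball around x₀ is a Peano space of dimension ≥ 2. -/
open Set

def PStep {Y : Type*} [MetricSpace Y] (W : Set Y) (ε : ℝ) (a b : Y) : Prop :=
  ∃ V : Set Y, V ⊆ W ∧ IsOpen V ∧ IsPreconnected V ∧ a ∈ V ∧ b ∈ V ∧ ∀ p ∈ V, ∀ q ∈ V, dist p q ≤ ε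

lemma pstep_nhds {Y : Type*} [MetricSpace Y] [LocallyConnectedSpace Y] {W : Set Y} (hW : IsOpen W)
    {ε : ℝ} (hε : 0 < ε) {x : Y} (hx : x ∈ W) : ∀ᶠ y in nhds x, PStep W ε x y := by
  have h1 : W ∩ Metric.ball x (ε/2) ∈ nhds x :=
    Filter.inter_mem (hW.mem_nhds hx) (Metric.ball_mem_nhds x (half_pos hε))
  obtain ⟨V, hV, hVo, hxV, hVc⟩ :=
    locallyConnectedSpace_iff_subsets_isOpen_isConnected.mp inferInstance x _ h1
  filter_upwards [hVo.mem_nhds hxV] with y hy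
  refine ⟨V, fun z hz => (hV hz).1, hVo, hVc.isPreconnected, hxV, hy, fun p hp q hq => ?_⟩
  have h2 := Metric.mem_ball.mp (hV hp).2
  have h3 := Metric.mem_ball'.mp (hV hq).2
  linarith [dist_triangle p x q]

lemma pchain {Y : Type*} [MetricSpace Y] [LocallyConnectedSpace Y] {W : Set Y} (hW : IsOpen W)
    (hWc : IsPreconnected W) {ε : ℝ} (hε : 0 < ε) {x y : Y} (hx : x ∈ W) (hy : y ∈ W) :
    ∃ m : ℕ, ∀ M ≥ m, ∃ c : ℕ → Y, c 0 = x ∧ c M = y ∧ ∀ i < M, PStep W ε (c i) (c (i+1)) := by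
  have h1 : Relation.ReflTransGen (PStep W ε) x y := by
    apply hWc.induction₂' (fun a b => Relation.ReflTransGen (PStep W ε) a b) _ _ hx hy
    · intro a ha
      apply nhdsWithin_le_nhds
      filter_upwards [pstep_nhds hW hε ha] with b hb
      refine ⟨Relation.ReflTransGen.single hb, Relation.ReflTransGen.single ?_⟩
      obtain ⟨V, h1, h2, h3, h4, h5, h6⟩ := hb
      exact ⟨V, h1, h2, h3, h5, h4, h6⟩
    · intro a b c _ _ _ h1 h2
      exact h1.trans h2
  clear hy
  induction h1 with
  | refl =>
    refine ⟨0, fun M _ => ⟨fun _ => x, rfl, rfl, fun i _ => ?_⟩⟩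
    exact (pstep_nhds hW hε hx).self_of_nhds
  | @tail b z _ hbz ih =>
    obtain ⟨m, hm⟩ := ih
    refine ⟨m+1, fun M hM => ?_⟩
    obtain ⟨M', rfl⟩ : ∃ M', M = M' + 1 := ⟨M - 1, by omega⟩
    obtain ⟨c, h0, h1, h2⟩ := hm M' (by omega)
    refine ⟨fun i => if i ≤ M' then c i else z, by simp [h0], by simp, fun i hi => ?_⟩
    by_cases hiM : i = M'
    · subst hiM; simpa [h1] using hbz
    · have h3 : i ≤ M' := by omega
      have h4 : i + 1 ≤ M' := by omega
      simpa [h3, h4] using h2 i (by omega)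

lemma prefine {Y : Type*} [MetricSpace Y] [LocallyConnectedSpace Y] (a b : Y) {ε ε' : ℝ}
    (hε' : 0 < ε') (hε : 0 ≤ ε) (N : ℕ) (x : ℕ → Y) (hN : 0 < N) (h0 : x 0 = a) (h1 : x N = b)
    (hs : ∀ i < N, PStep univ ε (x i) (x (i+1))) :
    ∃ (N' : ℕ) (x' : ℕ → Y), (0 < N' ∧ x' 0 = a ∧ x' N' = b ∧
      ∀ i < N', PStep univ ε' (x' i) (x' (i+1))) ∧
      ∃ M > 0, N' = N * M ∧ ∀ k ≤ N', dist (x' k) (x (k / M)) ≤ ε := by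
  have hs' : ∀ i, ∃ V : Set Y, i < N → IsOpen V ∧ IsPreconnected V ∧ x i ∈ V ∧ x (i+1) ∈ V ∧
      ∀ p ∈ V, ∀ q ∈ V, dist p q ≤ ε := by
    intro i
    by_cases hi : i < N
    · obtain ⟨V, -, h⟩ := hs i hi
      exact ⟨V, fun _ => h⟩
    · exact ⟨∅, fun h => absurd h hi⟩
  choose V hV using hs'
  have hm : ∀ i, ∃ m : ℕ, i < N → ∀ M ≥ m, ∃ c : ℕ → Y, c 0 = x i ∧ c M = x (i+1) ∧
      ∀ j < M, PStep (V i) ε' (c j) (c (j+1)) := by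
    intro i
    by_cases hi : i < N
    · obtain ⟨hVo, hVc, hxi, hxi', -⟩ := hV i hi
      obtain ⟨m, hm⟩ := pchain hVo hVc hε' hxi hxi'
      exact ⟨m, fun _ => hm⟩
    · exact ⟨0, fun h => absurd h hi⟩
  choose m hm using hm
  let M := (Finset.range N).sup m + 1
  have hM : 0 < M := Nat.succ_pos _
  have hc : ∀ i, ∃ c : ℕ → Y, c 0 = x i ∧ (i < N → c M = x (i+1) ∧
      ∀ j < M, PStep (V i) ε' (c j) (c (j+1))) := by
    intro i
    by_cases hi : i < N
    · obtain ⟨c, hc0, hc⟩ := hm i hi M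
        ((Finset.le_sup (f := m) (Finset.mem_range.mpr hi)).trans (Nat.le_succ _))
      exact ⟨c, hc0, fun _ => hc⟩
    · exact ⟨fun _ => x i, rfl, fun h => absurd h hi⟩
  choose c hc0 hc using hc
  refine ⟨N * M, fun k => c (k / M) (k % M), ⟨Nat.mul_pos hN hM, ?_, ?_, ?_⟩, M, hM, rfl, ?_⟩
  · simp [hc0, h0]
  · simp [hc0, h1, Nat.mul_div_cancel _ hM]
  · intro k hk
    have hi : k / M < N := (Nat.div_lt_iff_lt_mul hM).mpr hk
    have hj : k % M < M := Nat.mod_lt _ hM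
    obtain ⟨hcM, hcs⟩ := hc _ hi
    have hst : PStep univ ε' (c (k/M) (k%M)) (c (k/M) (k%M+1)) := by
      obtain ⟨V', _, h⟩ := hcs _ hj
      exact ⟨V', subset_univ _, h⟩
    have hk' := Nat.div_add_mod k M
    by_cases hlt : k % M + 1 < M
    · have e1 : (k+1) / M = k / M := by
        conv_lhs => rw [← hk', add_assoc, Nat.mul_add_div hM, Nat.div_eq_of_lt hlt, add_zero]
      have e2 : (k+1) % M = k % M + 1 := by
        conv_lhs => rw [← hk', add_assoc, Nat.mul_add_mod, Nat.mod_eq_of_lt hlt]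
      simp only [e1, e2]; exact hst
    · have e : k + 1 = M * (k/M + 1) := by rw [mul_add, mul_one]; omega
      have e1 : (k+1) / M = k / M + 1 := by rw [e, Nat.mul_div_cancel_left _ hM]
      have e2 : (k+1) % M = 0 := by rw [e, Nat.mul_mod_right]
      have e3 : k % M + 1 = M := by omega
      simp only [e1, e2, hc0]
      rw [e3, hcM] at hst; exact hst
  · intro k hk
    show dist (c (k/M) (k%M)) _ ≤ ε
    by_cases hkN : k = N * M
    · subst hkN
      simp [hc0, Nat.mul_div_cancel _ hM, hε]
    · have hk2 : k < N * M := lt_of_le_of_ne hk hkN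
      have hi : k / M < N := (Nat.div_lt_iff_lt_mul hM).mpr hk2
      have hj : k % M < M := Nat.mod_lt _ hM
      obtain ⟨hcM, hcs⟩ := hc _ hi
      obtain ⟨V', hV', _, _, h4, _⟩ := hcs _ hj
      obtain ⟨_, _, hx, _, hd⟩ := hV _ hi
      exact hd _ (hV' h4) _ hx

lemma ppath {Y : Type*} [MetricSpace Y] [CompactSpace Y] [LocallyConnectedSpace Y] {W : Set Y}
    (hW : IsOpen W) (hWc : IsPreconnected W) {r : ℝ} (hr : 0 < r)
    (hWr : ∀ p ∈ W, ∀ q ∈ W, dist p q ≤ r) {a b : Y} (ha : a ∈ W) (hb : b ∈ W) :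
    JoinedIn (Metric.closedBall a (3 * r)) a b := by
  let Q : ℕ → ℕ × (ℕ → Y) → Prop := fun n p => 0 < p.1 ∧ p.2 0 = a ∧ p.2 p.1 = b ∧
      ∀ i < p.1, PStep univ (r / 2 ^ n) (p.2 i) (p.2 (i+1))
  let R : ℕ → ℕ × (ℕ → Y) → ℕ × (ℕ → Y) → Prop := fun n p p' =>
    ∃ M > 0, p'.1 = p.1 * M ∧ ∀ k ≤ p'.1, dist (p'.2 k) (p.2 (k / M)) ≤ r / 2 ^ n
  have hnext : ∀ n p, ∃ p', Q n p → Q (n+1) p' ∧ R n p p' := by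
    intro n p
    by_cases hp : Q n p
    · obtain ⟨h1, h2, h3, h4⟩ := hp
      obtain ⟨N', x', h5, h6⟩ := prefine a b (ε' := r / 2^(n+1)) (by positivity) (by positivity)
        p.1 p.2 h1 h2 h3 h4
      exact ⟨(N', x'), fun _ => ⟨h5, h6⟩⟩
    · exact ⟨p, fun h => absurd h hp⟩
  choose next hnext using hnext
  let s : ℕ → ℕ × (ℕ → Y) := fun n => Nat.rec (1, fun i => if i = 0 then a else b) next n
  have hs0 : s 0 = (1, fun i => if i = 0 then a else b) := rfl
  have hsS : ∀ n, s (n+1) = next n (s n) := fun n => rfl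
  have hQ : ∀ n, Q n (s n) := by
    intro n
    induction n with
    | zero =>
      rw [hs0]
      refine ⟨one_pos, by simp, by simp, ?_⟩
      intro i hi
      have : i = 0 := by simpa using hi
      subst this
      exact ⟨W, subset_univ _, hW, hWc, by simpa using ha, by simpa using hb, by simpa using hWr⟩
    | succ n ih => rw [hsS]; exact (hnext n _ ih).1
  have hR : ∀ n, R n (s n) (s (n+1)) := fun n => by rw [hsS]; exact (hnext n _ (hQ n)).2
  let g : ℕ → ℝ → Y := fun n t => (s n).2 ⌊t * (s n).1⌋₊
  have hfl : ∀ n, ∀ t ∈ Icc (0:ℝ) 1, ⌊t * (s n).1⌋₊ ≤ (s n).1 := by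
    intro n t ht
    apply Nat.floor_le_of_le
    have : (0:ℝ) ≤ (s n).1 := Nat.cast_nonneg _
    nlinarith [ht.2]
  have hgd : ∀ n, ∀ t ∈ Icc (0:ℝ) 1, dist (g n t) (g (n+1) t) ≤ (2 * r) / 2 / 2 ^ n := by
    intro n t ht
    obtain ⟨M, hM, hN, hd⟩ := hR n
    have h1 := hd _ (hfl (n+1) t ht)
    have h2 : ⌊t * (s (n+1)).1⌋₊ / M = ⌊t * (s n).1⌋₊ := by
      rw [← Nat.floor_div_natCast, hN]
      congr 1
      have : (M:ℝ) ≠ 0 := by positivity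
      push_cast; field_simp
    rw [h2] at h1
    rw [dist_comm]
    calc _ ≤ _ := h1
      _ = _ := by ring
  have hlim : ∀ t, ∃ y, t ∈ Icc (0:ℝ) 1 → Filter.Tendsto (fun n => g n t) Filter.atTop (nhds y) := by
    intro t
    by_cases ht : t ∈ Icc (0:ℝ) 1
    · obtain ⟨y, hy⟩ := cauchySeq_tendsto_of_complete
        (cauchySeq_of_le_geometric_two (f := fun n => g n t) (fun n => hgd n t ht))
      exact ⟨y, fun _ => hy⟩
    · exact ⟨a, fun h => absurd h ht⟩
  choose γ hγ using hlim
  have hγd : ∀ n, ∀ t ∈ Icc (0:ℝ) 1, dist (g n t) (γ t) ≤ 2 * r / 2 ^ n := fun n t ht =>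
    dist_le_of_le_geometric_two_of_tendsto (f := fun n => g n t) (fun n => hgd n t ht) (hγ t ht) n
  have hcont1 : ∀ n, ∀ t ∈ Icc (0:ℝ) 1, ∀ u ∈ Icc (0:ℝ) 1, t ≤ u → u - t < 1 / (s n).1 →
      dist (g n t) (g n u) ≤ r / 2 ^ n := by
    intro n t ht u hu htu hlt
    obtain ⟨hN, -, -, hst⟩ := hQ n
    have hNr : (0:ℝ) < (s n).1 := by exact_mod_cast hN
    have h1 : ⌊t * (s n).1⌋₊ ≤ ⌊u * (s n).1⌋₊ := Nat.floor_le_floor (by gcongr)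
    have h2 : ⌊u * (s n).1⌋₊ ≤ ⌊t * (s n).1⌋₊ + 1 := by
      rw [← Nat.floor_add_one (mul_nonneg ht.1 hNr.le)]
      apply Nat.floor_le_floor
      rw [lt_div_iff₀ hNr] at hlt
      linarith
    show dist ((s n).2 _) ((s n).2 _) ≤ _
    rcases Nat.lt_or_ge ⌊t * (s n).1⌋₊ ⌊u * (s n).1⌋₊ with h3 | h3
    · have h4 : ⌊u * (s n).1⌋₊ = ⌊t * (s n).1⌋₊ + 1 := by omega
      have h5 := hfl n u hu
      obtain ⟨V, -, -, -, h6, h7, h8⟩ := hst ⌊t * (s n).1⌋₊ (by omega)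
      rw [h4]
      exact h8 _ h6 _ h7
    · have h4 : ⌊u * (s n).1⌋₊ = ⌊t * (s n).1⌋₊ := by omega
      rw [h4, dist_self]; positivity
  have hcont2 : ∀ n, ∀ t ∈ Icc (0:ℝ) 1, ∀ u ∈ Icc (0:ℝ) 1, dist t u < 1 / (s n).1 →
      dist (g n t) (g n u) ≤ r / 2 ^ n := by
    intro n t ht u hu hd
    rw [Real.dist_eq, abs_lt] at hd
    rcases le_total t u with h | h
    · exact hcont1 n t ht u hu h (by linarith)
    · rw [dist_comm]; exact hcont1 n u hu t ht h (by linarith)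
  have hγc : ContinuousOn γ (Icc 0 1) := by
    rw [Metric.continuousOn_iff]
    intro t ht ε hε
    obtain ⟨n, hn⟩ : ∃ n : ℕ, 5 * r / 2 ^ n < ε := by
      obtain ⟨n, hn⟩ := exists_pow_lt_of_lt_one (div_pos hε (by positivity : 0 < 5 * r))
        (by norm_num : (1/2:ℝ) < 1)
      refine ⟨n, ?_⟩
      rw [lt_div_iff₀ (by positivity)] at hn
      calc 5 * r / 2 ^ n = (1/2)^n * (5 * r) := by rw [one_div, inv_pow]; field_simp
        _ < ε := hn
    have hN : (0:ℝ) < (s n).1 := by exact_mod_cast (hQ n).1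
    refine ⟨1 / (s n).1, by positivity, fun u hu hd => ?_⟩
    have h1 := hγd n u hu
    have h2 := hγd n t ht
    have h3 := hcont2 n u hu t ht hd
    calc dist (γ u) (γ t) ≤ dist (γ u) (g n u) + dist (g n u) (g n t) + dist (g n t) (γ t) :=
          dist_triangle4 _ _ _ _
      _ ≤ 2 * r / 2^n + r / 2^n + 2 * r/2^n := by rw [dist_comm (γ u)]; gcongr
      _ = 5 * r / 2^n := by ring
      _ < ε := hn
  have hγ0 : γ 0 = a := by
    apply tendsto_nhds_unique (hγ 0 (by simp))
    have : (fun n => g n 0) = fun _ => a := by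
      ext n; simp only [g, zero_mul, Nat.floor_zero]; exact (hQ n).2.1
    rw [this]; exact tendsto_const_nhds
  have hγ1 : γ 1 = b := by
    apply tendsto_nhds_unique (hγ 1 (by simp))
    have : (fun n => g n 1) = fun _ => b := by
      ext n; simp only [g, one_mul, Nat.floor_natCast]; exact (hQ n).2.2.1
    rw [this]; exact tendsto_const_nhds
  apply JoinedIn.ofLine hγc hγ0 hγ1
  rintro _ ⟨t, ht, rfl⟩
  have h1 := hγd 0 t ht
  have h2 : dist (g 0 t) a ≤ r := by
    show dist ((s 0).2 _) a ≤ r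
    rw [hs0]
    show dist (if _ then a else b) a ≤ r
    split_ifs
    · simp [hr.le]
    · exact hWr _ hb _ ha
  rw [Metric.mem_closedBall]
  rw [dist_comm] at h1
  simp only [pow_zero, div_one] at h1
  linarith [dist_triangle (γ t) (g 0 t) a]

lemma peano_locPath {Y : Type*} [MetricSpace Y] [CompactSpace Y] [LocallyConnectedSpace Y] :
    LocallyPathConnectedSpace Y := by
  rw [locallyPathConnectedSpace_iff_pathComponentIn_mem_nhds]
  intro x u hu hx
  obtain ⟨ε, hε, hb⟩ := Metric.isOpen_iff.mp hu x hx
  filter_upwards [pstep_nhds isOpen_univ (by positivity : 0 < ε/4) (mem_univ x)] with y hy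
  obtain ⟨V, -, hVo, hVc, hxV, hyV, hd⟩ := hy
  apply (ppath hVo hVc (by positivity) hd hxV hyV).mono
  apply (Metric.closedBall_subset_ball _).trans hb
  linarith

lemma whitney {Z Y : Type*} [TopologicalSpace Z] [MetricSpace Y] [CompactSpace Y] (T : Z → Set Y)
    (hne : ∀ z, (T z).Nonempty)
    (hT : ∀ z, ∀ ε > 0, ∀ᶠ z' in nhds z, (∀ y ∈ T z', ∃ w ∈ T z, dist y w ≤ ε) ∧
      ∀ y ∈ T z, ∃ w ∈ T z', dist y w ≤ ε) :
    ∃ h : Z → ℝ, Continuous h ∧ (∀ z z', T z ⊆ T z' → h z' ≤ h z) ∧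
      ∀ z z', T z ⊆ T z' → (∃ y ∈ T z', y ∉ closure (T z)) → h z' < h z := by
  rcases isEmpty_or_nonempty Z with hZ | ⟨⟨z0⟩⟩
  · exact ⟨fun _ => 0, continuous_const, fun z => hZ.elim z, fun z => hZ.elim z⟩
  have : Nonempty Y := ⟨(hne z0).some⟩
  let q : ℕ → Y := TopologicalSpace.denseSeq Y
  have hq : DenseRange q := TopologicalSpace.denseRange_denseSeq Y
  let D := Metric.diam (univ : Set Y)
  have hD : ∀ n z, Metric.infDist (q n) (T z) ≤ D := by
    intro n z
    obtain ⟨y, hy⟩ := hne z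
    exact (Metric.infDist_le_dist_of_mem hy).trans
      (Metric.dist_le_diam_of_mem isCompact_univ.isBounded (mem_univ _) (mem_univ _))
  have hbd : ∀ n z, ‖(1/2:ℝ)^n * Metric.infDist (q n) (T z)‖ ≤ (1/2:ℝ)^n * D := by
    intro n z
    rw [Real.norm_of_nonneg (mul_nonneg (by positivity) Metric.infDist_nonneg)]
    exact mul_le_mul_of_nonneg_left (hD n z) (by positivity)
  have hsum : Summable fun n : ℕ => (1/2:ℝ)^n * D := summable_geometric_two.mul_right D
  have hsum' : ∀ z, Summable fun n : ℕ => (1/2:ℝ)^n * Metric.infDist (q n) (T z) := fun z =>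
    hsum.of_norm_bounded (fun n => hbd n z)
  have hinf : ∀ (x : Y) (A B : Set Y) (ε : ℝ), B.Nonempty → (∀ y ∈ B, ∃ w ∈ A, dist y w ≤ ε) →
      Metric.infDist x A ≤ Metric.infDist x B + ε := by
    intro x A B ε hB h
    rw [← sub_le_iff_le_add, Metric.le_infDist hB]
    intro y hy
    obtain ⟨w, hw, hd⟩ := h y hy
    have := Metric.infDist_le_dist_of_mem (x := x) hw
    linarith [dist_triangle x y w]
  refine ⟨fun z => ∑' n, (1/2:ℝ)^n * Metric.infDist (q n) (T z), ?_, ?_, ?_⟩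
  · apply continuous_tsum _ hsum hbd
    intro n
    apply continuous_const.mul
    rw [continuous_iff_continuousAt]
    intro z
    rw [ContinuousAt, Metric.tendsto_nhds]
    intro ε hε
    filter_upwards [hT z (ε/2) (half_pos hε)] with z' hz'
    have h1 := hinf (q n) _ _ _ (hne z') hz'.1
    have h2 := hinf (q n) _ _ _ (hne z) hz'.2
    rw [Real.dist_eq, abs_lt]
    constructor <;> linarith
  · intro z z' hzz
    apply (hsum' z').tsum_le_tsum _ (hsum' z)
    intro n
    exact mul_le_mul_of_nonneg_left (Metric.infDist_le_infDist_of_subset hzz (hne z)) (by positivity)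
  · rintro z z' hzz ⟨y, hy, hyc⟩
    have hpos : 0 < Metric.infDist y (T z) := by
      rw [← Metric.infDist_closure]
      exact (isClosed_closure.notMem_iff_infDist_pos (hne z).closure).mp hyc
    obtain ⟨n, hn⟩ := hq.exists_dist_lt y (half_pos hpos)
    apply Summable.tsum_lt_tsum (i := n) _ _ (hsum' z') (hsum' z)
    · intro n
      exact mul_le_mul_of_nonneg_left (Metric.infDist_le_infDist_of_subset hzz (hne z)) (by positivity)
    · apply mul_lt_mul_of_pos_left _ (by positivity)
      have h1 := Metric.infDist_le_dist_of_mem (x := q n) hy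
      have h2 := Metric.infDist_le_infDist_add_dist (s := T z) (x := y) (y := q n)
      rw [dist_comm] at h1
      linarith

def LValid {Y : Type*} (f : ℝ → Y) (A : Set ℝ) (x : ℝ) (p : ℝ × ℝ) : Prop :=
  p.1 ∈ A ∧ p.2 ∈ A ∧ p.1 ≤ x ∧ x ≤ p.2 ∧ f p.1 = f p.2 ∧ ∀ z ∈ A, z ≤ p.1 ∨ p.2 ≤ z

lemma lvalid_unique {Y : Type*} {f : ℝ → Y} {A : Set ℝ} {x : ℝ} {p q : ℝ × ℝ}
    (hp : LValid f A x p) (hq : LValid f A x q) : f p.1 = f q.1 := by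
  obtain ⟨p1, p2, p3, p4, p5, p6⟩ := hp
  obtain ⟨q1, q2, q3, q4, q5, q6⟩ := hq
  rcases lt_trichotomy p.1 q.1 with h | h | h
  · have := (p6 _ q1).resolve_left (not_le.mpr h)
    rw [p5]; congr 1; linarith
  · rw [h]
  · have := (q6 _ p1).resolve_left (not_le.mpr h)
    rw [q5]; congr 1; linarith

lemma loop_erase {Y : Type*} [TopologicalSpace Y] [T2Space Y] (f : ℝ → Y) (hf : Continuous f) :
    ∃ g : ℝ → Y, ContinuousOn g (Icc 0 1) ∧ g 0 = f 0 ∧ g 1 = f 1 ∧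
      (∀ t ∈ Icc (0:ℝ) 1, g t ∈ f '' Icc 0 1) ∧
      ∀ x ∈ Icc (0:ℝ) 1, ∀ y ∈ Icc (0:ℝ) 1, ∀ z, x ≤ z → z ≤ y → g x = g y → g z = g x := by
  let P : Set (Set ℝ) := {A | IsClosed A ∧ A ⊆ Icc 0 1 ∧ ∀ x ∈ Icc (0:ℝ) 1, ∃ p, LValid f A x p}
  have hP : ∀ A, A ∈ P ↔ (IsClosed A ∧ A ⊆ Icc 0 1 ∧ ∀ x ∈ Icc (0:ℝ) 1, ∃ p, LValid f A x p) :=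
    fun A => Iff.rfl
  have h0 : Icc (0:ℝ) 1 ∈ P := ⟨isClosed_Icc, Subset.rfl, fun x hx =>
    ⟨(x, x), hx, hx, le_rfl, le_rfl, rfl, fun z _ => le_total _ _⟩⟩
  obtain ⟨A, -, hAP, hAm⟩ := zorn_superset_nonempty P (by
    intro c hcP hch hcn
    refine ⟨⋂₀ c, ⟨isClosed_sInter fun A hA => (hcP hA).1, ?_, ?_⟩, fun s hs => sInter_subset_of_mem hs⟩
    · obtain ⟨A, hA⟩ := hcn
      exact (sInter_subset_of_mem hA).trans (hcP hA).2.1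
    · intro x hx
      let C : c → Set (ℝ × ℝ) := fun A => {p | p.1 ∈ A.1 ∧ p.2 ∈ A.1 ∧ p.1 ≤ x ∧ x ≤ p.2 ∧
        f p.1 = f p.2 ∧ ∀ z ∈ ⋂₀ c, z ≤ p.1 ∨ p.2 ≤ z}
      have hCcl : ∀ A, IsClosed (C A) := by
        intro A
        have hAc := (hcP A.2).1
        refine (hAc.preimage continuous_fst).inter ((hAc.preimage continuous_snd).inter
          ((isClosed_le continuous_fst continuous_const).inter
          ((isClosed_le continuous_const continuous_snd).inter
          ((isClosed_eq (hf.comp continuous_fst) (hf.comp continuous_snd)).inter ?_))))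
        have : {p : ℝ × ℝ | ∀ z ∈ ⋂₀ c, z ≤ p.1 ∨ p.2 ≤ z} =
            ⋂ z ∈ ⋂₀ c, ({p : ℝ × ℝ | z ≤ p.1} ∪ {p | p.2 ≤ z}) := by
          ext p; simp only [mem_iInter]; rfl
        change IsClosed {p : ℝ × ℝ | ∀ z ∈ ⋂₀ c, z ≤ p.1 ∨ p.2 ≤ z}
        rw [this]
        exact isClosed_biInter fun z _ => (isClosed_le continuous_const continuous_fst).union
          (isClosed_le continuous_snd continuous_const)
      have hCc : ∀ A, IsCompact (C A) := by
        intro A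
        apply ((isCompact_Icc (a := (0:ℝ)) (b := 1)).prod (isCompact_Icc (a := (0:ℝ)) (b := 1))).of_isClosed_subset (hCcl A)
        rintro p ⟨h1, h2, -⟩
        exact ⟨(hcP A.2).2.1 h1, (hcP A.2).2.1 h2⟩
      have hCn : ∀ A, (C A).Nonempty := by
        intro A
        obtain ⟨p, p1, p2, p3, p4, p5, p6⟩ := (hcP A.2).2.2 x hx
        exact ⟨p, p1, p2, p3, p4, p5, fun z hz => p6 z (hz _ A.2)⟩
      have hCm : ∀ A B : c, A.1 ⊆ B.1 → C A ⊆ C B := by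
        rintro A B hAB p ⟨p1, p2, p3⟩
        exact ⟨hAB p1, hAB p2, p3⟩
      have : Nonempty c := hcn.to_subtype
      obtain ⟨p, hp⟩ := IsCompact.nonempty_iInter_of_directed_nonempty_isCompact_isClosed C (by
        intro A B
        rcases hch.total A.2 B.2 with h | h
        · exact ⟨A, Subset.rfl, hCm _ _ h⟩
        · exact ⟨B, hCm _ _ h, Subset.rfl⟩) hCn hCc hCcl
      rw [mem_iInter] at hp
      obtain ⟨A0⟩ := this
      obtain ⟨-, -, p3⟩ := hp A0
      exact ⟨p, fun A hA => (hp ⟨A, hA⟩).1, fun A hA => (hp ⟨A, hA⟩).2.1, p3⟩) _ h0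
  obtain ⟨hAc, hAI, hAv⟩ := hAP
  have star : ∀ a ∈ A, ∀ b ∈ A, a ≤ b → f a = f b → ∀ z ∈ A, z ≤ a ∨ b ≤ z := by
    intro a ha b hb hab hfab z hz
    by_contra hcon
    push Not at hcon
    have hmem : A \ Ioo a b ∈ P := by
      refine ⟨hAc.sdiff isOpen_Ioo, sdiff_subset.trans hAI, ?_⟩
      intro x hx
      have haA : a ∈ A \ Ioo a b := ⟨ha, fun h => lt_irrefl _ h.1⟩
      have hbA : b ∈ A \ Ioo a b := ⟨hb, fun h => lt_irrefl _ h.2⟩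
      by_cases hxab : a ≤ x ∧ x ≤ b
      · refine ⟨(a, b), haA, hbA, hxab.1, hxab.2, hfab, fun w hw => ?_⟩
        by_contra hc
        push Not at hc
        exact hw.2 ⟨hc.1, hc.2⟩
      · obtain ⟨p, p1, p2, p3, p4, p5, p6⟩ := hAv x hx
        have : p.2 ≤ a ∨ b ≤ p.1 := by
          by_cases hxa : a ≤ x
          · have hxb : b < x := by
              by_contra h; exact hxab ⟨hxa, not_lt.mp h⟩
            right
            exact (p6 b hb).resolve_right (by intro h; linarith)
          · push Not at hxa
            left
            exact (p6 a ha).resolve_left (by intro h; linarith)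
        refine ⟨p, ⟨p1, fun h => ?_⟩, ⟨p2, fun h => ?_⟩, p3, p4, p5, fun w hw => p6 w hw.1⟩
        · rcases this with h' | h'
          · linarith [h.1]
          · linarith [h.2]
        · rcases this with h' | h'
          · linarith [h.1]
          · linarith [h.2]
    exact (hAm hmem sdiff_subset hz).2 ⟨hcon.1, hcon.2⟩
  have hAv' : ∀ x, ∃ p, x ∈ Icc (0:ℝ) 1 → LValid f A x p := by
    intro x
    by_cases hx : x ∈ Icc (0:ℝ) 1
    · obtain ⟨p, hp⟩ := hAv x hx
      exact ⟨p, fun _ => hp⟩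
    · exact ⟨0, fun h => absurd h hx⟩
  choose p hp using hAv'
  have hgA : ∀ x ∈ A, f (p x).1 = f x := by
    intro x hx
    have h1 := hp x (hAI hx)
    have h2 : LValid f A x (x, x) := ⟨hx, hx, le_rfl, le_rfl, rfl, fun z _ => le_total _ _⟩
    exact lvalid_unique h1 h2
  have h0A : (0:ℝ) ∈ A := by
    obtain ⟨p1, -, p3, -⟩ := hp 0 (by simp)
    have : (p 0).1 = 0 := le_antisymm p3 (hAI p1).1
    rwa [this] at p1
  have h1A : (1:ℝ) ∈ A := by
    obtain ⟨-, p2, -, p4, -⟩ := hp 1 (by simp)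
    have : (p 1).2 = 1 := le_antisymm (hAI p2).2 p4
    rwa [this] at p2
  refine ⟨fun x => f (p x).1, ?_, hgA 0 h0A, hgA 1 h1A, ?_, ?_⟩
  · intro x hx
    by_cases hxA : x ∈ A
    · rw [ContinuousWithinAt, hgA x hxA]
      have hfx : Filter.Tendsto f (nhds x) (nhds (f x)) := hf.continuousAt
      intro V hV
      have hV' := hfx hV
      obtain ⟨δ, hδ, hb⟩ := Metric.mem_nhds_iff.mp hV'
      rw [Filter.mem_map]
      filter_upwards [self_mem_nhdsWithin, nhdsWithin_le_nhds (Metric.ball_mem_nhds x hδ)] with y hy hyb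
      obtain ⟨p1, p2, p3, p4, p5, p6⟩ := hp y hy
      rw [Metric.mem_ball, Real.dist_eq, abs_lt] at hyb
      show f (p y).1 ∈ V
      rcases le_total y x with h | h
      · rcases p6 x hxA with h' | h'
        · apply hb
          rw [Metric.mem_ball, Real.dist_eq, abs_lt]
          constructor <;> linarith
        · rw [p5]
          apply hb
          rw [Metric.mem_ball, Real.dist_eq, abs_lt]
          constructor <;> linarith
      · rcases p6 x hxA with h' | h'
        · apply hb
          rw [Metric.mem_ball, Real.dist_eq, abs_lt]
          constructor <;> linarith
        · rw [p5]
          apply hb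
          rw [Metric.mem_ball, Real.dist_eq, abs_lt]
          constructor <;> linarith
    · obtain ⟨p1, p2, p3, p4, p5, p6⟩ := hp x hx
      have h1 : (p x).1 < x := lt_of_le_of_ne p3 (fun h => hxA (h ▸ p1))
      have h2 : x < (p x).2 := lt_of_le_of_ne p4 (fun h => hxA (h ▸ p2))
      refine ContinuousWithinAt.congr_of_eventuallyEq (f := fun _ => f (p x).1)
        (g := fun y => f (p y).1) continuousWithinAt_const ?_ rfl
      filter_upwards [self_mem_nhdsWithin, nhdsWithin_le_nhds (Ioo_mem_nhds h1 h2)] with y hy hyb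
      exact lvalid_unique (hp y hy) ⟨p1, p2, hyb.1.le, hyb.2.le, p5, p6⟩
  · intro t ht
    exact ⟨_, hAI (hp t ht).1, rfl⟩
  · intro x hx y hy z hxz hzy hg
    obtain ⟨p1, p2, p3, p4, p5, p6⟩ := hp x hx
    obtain ⟨q1, q2, q3, q4, q5, q6⟩ := hp y hy
    have hpq : f (p x).1 = f (p y).2 := hg.trans q5
    exact lvalid_unique (hp z ⟨hx.1.trans hxz, hzy.trans hy.2⟩) (q := ((p x).1, (p y).2))
      ⟨p1, q2, p3.trans hxz, hzy.trans q4, hpq, star _ p1 _ q2 (by linarith) hpq⟩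

lemma arc_of_joined {Y : Type*} [MetricSpace Y] [CompactSpace Y] {S : Set Y} {a b : Y}
    (hj : JoinedIn S a b) (hab : a ≠ b) :
    ∃ f : ℝ → Y, Continuous f ∧ InjOn f (Icc 0 1) ∧ f 0 = a ∧ f 1 = b ∧
      ∀ t ∈ Icc (0:ℝ) 1, f t ∈ S := by
  obtain ⟨γ, hγ⟩ := hj
  obtain ⟨g, hgc, hg0, hg1, hgm, hgx⟩ := loop_erase γ.extend γ.continuous_extend
  rw [Path.extend_zero] at hg0
  rw [Path.extend_one] at hg1
  have hgS : ∀ t ∈ Icc (0:ℝ) 1, g t ∈ S := by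
    intro t ht
    obtain ⟨s, hs, he⟩ := hgm t ht
    rw [← he, Path.extend_apply γ hs]
    exact hγ _
  let T : Icc (0:ℝ) 1 → Set Y := fun t => g '' Icc 0 t
  have hTm : ∀ s t : Icc (0:ℝ) 1, s ≤ t → T s ⊆ T t := fun s t hst =>
    image_mono (Icc_subset_Icc le_rfl hst)
  have hself : ∀ t : Icc (0:ℝ) 1, g t ∈ T t := fun t => ⟨t, ⟨t.2.1, le_rfl⟩, rfl⟩
  have hTcl : ∀ t, IsClosed (T t) := fun t =>
    (isCompact_Icc.image_of_continuousOn (hgc.mono (Icc_subset_Icc le_rfl t.2.2))).isClosed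
  obtain ⟨h, hc, hm, hs⟩ := whitney T (fun t => ⟨_, hself t⟩) (by
    intro z ε hε
    obtain ⟨δ, hδ, hd⟩ := Metric.continuousOn_iff.mp hgc z z.2 (ε/2) (half_pos hε)
    filter_upwards [Metric.ball_mem_nhds z hδ] with z' hz'
    rw [Metric.mem_ball, Subtype.dist_eq, Real.dist_eq, abs_lt] at hz'
    have key : ∀ s : ℝ, s ∈ Icc (0:ℝ) 1 → |s - z| < δ → dist (g s) (g z) < ε/2 := fun s hs hsz =>
      hd s hs (by rwa [Real.dist_eq])
    constructor
    · rintro _ ⟨s, hs, rfl⟩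
      by_cases hsz : s ≤ z
      · exact ⟨g s, ⟨s, ⟨hs.1, hsz⟩, rfl⟩, by simp [hε.le]⟩
      · push Not at hsz
        refine ⟨g z, hself z, ?_⟩
        have := key s ⟨hs.1, hs.2.trans z'.2.2⟩ (by rw [abs_lt]; constructor <;> linarith [hs.2])
        linarith
    · rintro _ ⟨s, hs, rfl⟩
      by_cases hsz : s ≤ z'
      · exact ⟨g s, ⟨s, ⟨hs.1, hsz⟩, rfl⟩, by simp [hε.le]⟩
      · push Not at hsz
        refine ⟨g z', hself z', ?_⟩
        have h1 := key s ⟨hs.1, hs.2.trans z.2.2⟩ (by rw [abs_lt]; constructor <;> linarith [hs.2])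
        have h2 := key z' z'.2 (by rw [abs_lt]; constructor <;> linarith [hs.2])
        rw [dist_comm] at h2
        linarith [dist_triangle (g s) (g z) (g z')])
  have hlt : ∀ s t : Icc (0:ℝ) 1, s ≤ t → g s ≠ g t → h t < h s := by
    intro s t hst hne
    refine hs s t (hTm s t hst) ⟨g t, hself t, ?_⟩
    rw [(hTcl s).closure_eq]
    rintro ⟨u, hu, hgu⟩
    apply hne
    rw [← hgu]
    exact hgx u ⟨hu.1, hu.2.trans s.2.2⟩ t t.2 s hu.2 hst hgu
  have heq : ∀ s t : Icc (0:ℝ) 1, s ≤ t → g s = g t → h t = h s := by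
    intro s t hst hg
    apply le_antisymm (hm s t (hTm s t hst)) (hm t s _)
    rintro _ ⟨u, hu, rfl⟩
    by_cases hus : u ≤ s
    · exact ⟨u, ⟨hu.1, hus⟩, rfl⟩
    · rw [hgx s s.2 t t.2 u (not_le.mp hus).le hu.2 hg]
      exact hself s
  have hiff : ∀ s t : Icc (0:ℝ) 1, h s = h t ↔ g s = g t := by
    intro s t
    rcases le_total s t with hst | hst
    · refine ⟨fun hh => ?_, fun hh => (heq s t hst hh).symm⟩
      by_contra hne
      exact (hlt s t hst hne).ne hh.symm
    · refine ⟨fun hh => ?_, fun hh => (heq t s hst hh.symm)⟩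
      by_contra hne
      exact (hlt t s hst (Ne.symm hne)).ne hh
  let i0 : Icc (0:ℝ) 1 := ⟨0, by simp⟩
  let i1 : Icc (0:ℝ) 1 := ⟨1, by simp⟩
  have hL : 0 < h i0 - h i1 := by
    have := hlt i0 i1 (by show (0:ℝ) ≤ 1; norm_num) (by show g 0 ≠ g 1; rwa [hg0, hg1])
    linarith
  set L := h i0 - h i1 with hLdef
  have hle0 : ∀ t, h t ≤ h i0 := fun t => hm i0 t (hTm i0 t t.2.1)
  have hle1 : ∀ t, h i1 ≤ h t := fun t => hm t i1 (hTm t i1 t.2.2)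
  let k : Icc (0:ℝ) 1 → Icc (0:ℝ) 1 := fun t => ⟨(h i0 - h t) / L,
    div_nonneg (by linarith [hle0 t]) hL.le, by rw [div_le_one hL]; linarith [hle1 t]⟩
  have hk : Continuous k := by
    apply Continuous.subtype_mk
    exact (continuous_const.sub hc).div_const _
  have hk0 : k i0 = i0 := by apply Subtype.ext; show (h i0 - h i0) / L = 0; simp
  have hk1 : k i1 = i1 := by apply Subtype.ext; show (h i0 - h i1) / L = 1; exact div_self hL.ne'
  have hkiff : ∀ s t, k s = k t ↔ g s = g t := by
    intro s t
    rw [← hiff, Subtype.ext_iff]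
    show (h i0 - h s) / L = (h i0 - h t) / L ↔ _
    rw [div_left_inj' hL.ne']
    constructor <;> intro h' <;> linarith
  have hksurj : Function.Surjective k := by
    intro v
    have : IsPreconnected (range k) := isPreconnected_range hk
    have hsub := this.Icc_subset ⟨i0, hk0⟩ ⟨i1, hk1⟩
    exact hsub ⟨v.2.1, v.2.2⟩
  have hkq : Topology.IsQuotientMap k := hk.isClosedMap.isQuotientMap hk hksurj
  choose r hr using hksurj
  let φ : Icc (0:ℝ) 1 → Y := fun v => g (r v)
  have hφk : φ ∘ k = fun t : Icc (0:ℝ) 1 => g t := by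
    ext t
    exact (hkiff _ _).mp (hr (k t))
  have hφc : Continuous φ := by
    rw [hkq.continuous_iff, hφk]
    exact continuousOn_iff_continuous_domRestrict.mp hgc
  have hφinj : Function.Injective φ := by
    intro u v huv
    have := (hkiff _ _).mpr huv
    rwa [hr, hr] at this
  have h01 : (0:ℝ) ≤ 1 := zero_le_one
  refine ⟨Set.IccExtend h01 φ, hφc.Icc_extend', ?_, ?_, ?_, ?_⟩
  · intro s hs t ht hst
    rw [Set.IccExtend_of_mem h01 _ hs, Set.IccExtend_of_mem h01 _ ht] at hst
    exact congrArg Subtype.val (hφinj hst)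
  · rw [Set.IccExtend_of_mem h01 _ (by simp : (0:ℝ) ∈ Icc (0:ℝ) 1), ← hg0]
    have := congrFun hφk i0
    rw [Function.comp, hk0] at this
    exact this
  · rw [Set.IccExtend_of_mem h01 _ (by simp : (1:ℝ) ∈ Icc (0:ℝ) 1), ← hg1]
    have := congrFun hφk i1
    rw [Function.comp, hk1] at this
    exact this
  · intro t ht
    rw [Set.IccExtend_of_mem h01 _ ht]
    exact hgS _ (r _).2

lemma fiber_cover {Y : Type*} [MetricSpace Y] [CompactSpace Y] (h : Y → ℝ) (hc : Continuous h)
    (hl : ∀ C : Set Y, IsPreconnected C → (∀ x ∈ C, ∀ y ∈ C, h x = h y) → C.Subsingleton)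
    (U : Set (Set Y)) (hUo : ∀ u ∈ U, IsOpen u) (hUc : ⋃₀ U = Set.univ) (t : ℝ) :
    ∃ ε > 0, ∃ (n : ℕ) (W : Fin n → Set Y), (∀ j, IsOpen (W j)) ∧ (∀ j, ∃ u ∈ U, W j ⊆ u) ∧
      (∀ i j x, x ∈ W i → x ∈ W j → i = j) ∧ ∀ x, h x ∈ Metric.ball t ε → ∃ j, x ∈ W j := by
  let S : Set Y := h ⁻¹' {t}
  have hS : IsClosed S := isClosed_singleton.preimage hc
  have : CompactSpace S := isCompact_iff_compactSpace.mp hS.isCompact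
  have : TotallyDisconnectedSpace S := by
    rw [totallyDisconnectedSpace_subtype_iff]
    intro C hCS hC
    apply hl C hC
    intro x hx y hy
    have h1 : h x = t := hCS hx
    have h2 : h y = t := hCS hy
    rw [h1, h2]
  let Uc : U → TopologicalSpace.Opens S := fun u =>
    ⟨Subtype.val ⁻¹' u.1, (hUo u.1 u.2).preimage continuous_subtype_val⟩
  have hcov : TopologicalSpace.IsOpenCover Uc := by
    apply TopologicalSpace.IsOpenCover.mk
    ext x
    have : (x : Y) ∈ ⋃₀ U := by rw [hUc]; trivial
    obtain ⟨u, hu, hxu⟩ := this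
    simp only [TopologicalSpace.Opens.coe_iSup, mem_iUnion, TopologicalSpace.Opens.coe_top, mem_univ, iff_true]
    exact ⟨⟨u, hu⟩, hxu⟩
  obtain ⟨n, K, hK, hKc, hKd⟩ := hcov.exists_finite_nonempty_disjoint_clopen_cover
  choose hKne u hKu using hK
  let L : Fin n → Set Y := fun j => Subtype.val '' (K j : Set S)
  have hLc : ∀ j, IsClosed (L j) := fun j =>
    hS.isClosedEmbedding_subtypeVal.isClosedMap _ (K j).isClopen.1
  have hLne : ∀ j, (L j).Nonempty := fun j => by
    apply Set.Nonempty.image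
    by_contra hne
    rw [Set.not_nonempty_iff_eq_empty] at hne
    exact hKne j (SetLike.coe_injective hne)
  have hLd : ∀ i j, i ≠ j → ∀ x, x ∈ L i → x ∉ L j := by
    rintro i j hij x ⟨y, hy, rfl⟩ ⟨z, hz, hzy⟩
    have : z = y := Subtype.ext hzy
    subst this
    have h1 : Disjoint (K i : Set S) (K j) := by
      rw [TopologicalSpace.Clopens.coe_disjoint]; exact hKd hij
    exact Set.disjoint_left.mp h1 hy hz
  let O : Fin n → Set Y := fun j =>
    (⋂ i : {i : Fin n // i ≠ j}, {y | Metric.infDist y (L j) < Metric.infDist y (L i)}) ∩ (u j).1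
  have hO : ∀ j, IsOpen (O j) := by
    intro j
    apply IsOpen.inter _ (hUo _ (u j).2)
    apply isOpen_iInter_of_finite
    intro i
    exact isOpen_lt (Metric.continuous_infDist_pt _) (Metric.continuous_infDist_pt _)
  have hLO : ∀ j, L j ⊆ O j := by
    rintro j x hx
    refine ⟨?_, ?_⟩
    · simp only [mem_iInter]
      rintro ⟨i, hi⟩
      show Metric.infDist x (L j) < Metric.infDist x (L i)
      rw [Metric.infDist_zero_of_mem hx]
      exact ((hLc i).notMem_iff_infDist_pos (hLne i)).mp (hLd j i hi.symm x hx)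
    · obtain ⟨y, hy, rfl⟩ := hx
      exact hKu j hy
  have hcl : IsClosed (h '' (⋃ j, O j)ᶜ) :=
    ((isOpen_iUnion hO).isClosed_compl.isCompact.image hc).isClosed
  have ht : t ∉ h '' (⋃ j, O j)ᶜ := by
    rintro ⟨x, hx, hxt⟩
    apply hx
    have : (⟨x, hxt⟩ : S) ∈ ⋃ j, (K j : Set S) := hKc (mem_univ _)
    obtain ⟨j, hj⟩ := mem_iUnion.mp this
    exact mem_iUnion.mpr ⟨j, hLO j ⟨_, hj, rfl⟩⟩
  obtain ⟨ε, hε, hb⟩ := Metric.isOpen_iff.mp hcl.isOpen_compl t ht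
  refine ⟨ε, hε, n, O, hO, fun j => ⟨u j, (u j).2, inter_subset_right⟩, ?_, ?_⟩
  · rintro i j x ⟨hi, -⟩ ⟨hj, -⟩
    by_contra hij
    have h1 := mem_iInter.mp hi ⟨j, Ne.symm hij⟩
    have h2 := mem_iInter.mp hj ⟨i, hij⟩
    exact lt_asymm (show Metric.infDist x (L i) < Metric.infDist x (L j) from h1) h2
  · intro x hx
    by_contra hne
    exact hb hx ⟨x, fun hx' => hne (mem_iUnion.mp hx'), rfl⟩

lemma light_dim {Y : Type*} [MetricSpace Y] [CompactSpace Y] (h : Y → ℝ) (hc : Continuous h)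
    (hl : ∀ C : Set Y, IsPreconnected C → (∀ x ∈ C, ∀ y ∈ C, h x = h y) → C.Subsingleton) :
    CovDimLE Y 1 := by
  intro U _ hUo hUc
  choose ε hε H using fiber_cover h hc hl U hUo hUc
  obtain ⟨M, hM⟩ : ∃ M, ∀ x, |h x| ≤ M := by
    obtain ⟨M, hM⟩ := (isCompact_range hc).isBounded.exists_norm_le
    exact ⟨M, fun x => hM _ ⟨x, rfl⟩⟩
  obtain ⟨δ₀, hδ₀, hleb⟩ := lebesgue_number_lemma_of_metric (isCompact_Icc (a := -M-1) (b := M+1))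
    (c := fun t => Metric.ball t (ε t)) (fun _ => Metric.isOpen_ball)
    (fun t _ => mem_iUnion.mpr ⟨t, Metric.mem_ball_self (hε t)⟩)
  set δ := min δ₀ 1 with hδdef
  have hδ : 0 < δ := lt_min hδ₀ one_pos
  have hδ1 : δ ≤ 1 := min_le_right _ _
  have hδ2 : δ ≤ δ₀ := min_le_left _ _
  have G : ∀ t : ℝ, ∃ (n : ℕ) (W : Fin n → Set Y), (∀ j, IsOpen (W j)) ∧ (∀ j, ∃ u ∈ U, W j ⊆ u) ∧
      (∀ i j x, x ∈ W i → x ∈ W j → i = j) ∧ ∀ x, h x ∈ Metric.ball t δ → ∃ j, x ∈ W j := by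
    intro t
    by_cases ht : t ∈ Icc (-M-1) (M+1)
    · obtain ⟨s, hs⟩ := hleb t ht
      obtain ⟨n, W, h1, h2, h3, h4⟩ := H s
      exact ⟨n, W, h1, h2, h3, fun x hx => h4 x (hs (Metric.ball_subset_ball hδ2 hx))⟩
    · refine ⟨0, fun _ => ∅, fun j => j.elim0, fun j => j.elim0, fun j => j.elim0, ?_⟩
      intro x hx
      exfalso
      apply ht
      rw [Metric.mem_ball, Real.dist_eq, abs_lt] at hx
      have := abs_le.mp (hM x)
      constructor <;> linarith
  choose n W hWo hWu hWd hWc using fun i : ℤ => G (i * δ)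
  let B : ℤ → Set Y := fun i => h ⁻¹' Metric.ball (i * δ) δ
  have hB : ∀ i, IsOpen (B i) := fun i => Metric.isOpen_ball.preimage hc
  let N : ℤ := ⌈(M+1) / δ⌉
  refine ⟨⋃ i ∈ Icc (-N) N, range (fun j => W i j ∩ B i), ?_, ?_, ?_, ?_, ?_⟩
  · exact (Set.finite_Icc _ _).biUnion fun i _ => Set.finite_range _
  · intro v hv
    simp only [mem_iUnion, mem_range] at hv
    obtain ⟨i, -, j, rfl⟩ := hv
    exact (hWo i j).inter (hB i)
  · apply Set.eq_univ_of_forall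
    intro x
    have h1 := Int.floor_le (h x / δ)
    have h2 := Int.lt_floor_add_one (h x / δ)
    set i := ⌊h x / δ⌋ with hi
    rw [le_div_iff₀ hδ] at h1
    rw [div_lt_iff₀ hδ] at h2
    have hxB : x ∈ B i := by
      show h x ∈ Metric.ball _ _
      rw [Metric.mem_ball, Real.dist_eq, abs_lt]
      constructor <;> linarith
    obtain ⟨j, hj⟩ := hWc i x hxB
    have hN : (M+1) / δ ≤ N := Int.le_ceil _
    rw [div_le_iff₀ hδ] at hN
    have hMx := abs_le.mp (hM x)
    refine ⟨_, mem_biUnion (x := i) ⟨?_, ?_⟩ ⟨j, rfl⟩, hj, hxB⟩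
    · have : -(N:ℝ) ≤ i := by
        by_contra hlt; push Not at hlt
        have h3 : (i:ℝ) + 1 ≤ -N := by exact_mod_cast Int.add_one_le_iff.mpr (by exact_mod_cast hlt)
        nlinarith
      exact_mod_cast this
    · have : (i:ℝ) ≤ N := by
        by_contra hlt; push Not at hlt
        nlinarith
      exact_mod_cast this
  · intro v hv
    simp only [mem_iUnion, mem_range] at hv
    obtain ⟨i, -, j, rfl⟩ := hv
    obtain ⟨u, hu, hw⟩ := hWu i j
    exact ⟨u, hu, inter_subset_left.trans hw⟩
  · intro x
    set i := ⌊h x / δ⌋ with hi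
    have key : ∀ k : ℤ, ∃ e : Set Y, ∀ j, x ∈ W k j → W k j ∩ B k = e := by
      intro k
      by_cases hk : ∃ j, x ∈ W k j
      · obtain ⟨j, hj⟩ := hk
        exact ⟨W k j ∩ B k, fun j' hj' => by rw [hWd k j j' x hj hj']⟩
      · exact ⟨∅, fun j hj => absurd ⟨j, hj⟩ hk⟩
    choose e he using key
    have hsub : {v ∈ ⋃ i ∈ Icc (-N) N, range (fun j => W i j ∩ B i) | x ∈ v} ⊆ {e i, e (i+1)} := by
      rintro v ⟨hv, hxv⟩
      simp only [mem_iUnion, mem_range] at hv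
      obtain ⟨k, -, j, rfl⟩ := hv
      have hk : k = i ∨ k = i + 1 := by
        have hb : h x ∈ Metric.ball ((k:ℝ) * δ) δ := hxv.2
        rw [Metric.mem_ball, Real.dist_eq, abs_lt] at hb
        have h1 := Int.floor_le (h x / δ)
        have h2 := Int.lt_floor_add_one (h x / δ)
        rw [← hi, le_div_iff₀ hδ] at h1
        rw [← hi, div_lt_iff₀ hδ] at h2
        have h3 : (k:ℝ) < i + 2 := by by_contra hlt; push Not at hlt; nlinarith
        have h4 : (i:ℝ) < k + 1 := by by_contra hlt; push Not at hlt; nlinarith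
        have h3' : k < i + 2 := by exact_mod_cast h3
        have h4' : i < k + 1 := by exact_mod_cast h4
        omega
      rcases hk with rfl | rfl
      · left; exact he _ j hxv.1
      · right; exact he _ j hxv.1
    calc _ ≤ ({e i, e (i+1)} : Set (Set Y)).ncard := Set.ncard_le_ncard hsub (Set.toFinite _)
      _ ≤ 1 + 1 := by
        have := Set.ncard_insert_le (e i) {e (i+1)}
        rwa [Set.ncard_singleton] at this

lemma joinedIn_of_cont {Y : Type*} [TopologicalSpace Y] {F : Set Y} (f : ℝ → Y) (hf : Continuous f)
    {a b : ℝ} (hab : a ≤ b) (h : ∀ t ∈ Icc a b, f t ∈ F) : JoinedIn F (f a) (f b) := by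
  apply JoinedIn.ofLine (f := fun t => f (a + t * (b - a)))
  · exact (hf.comp (by fun_prop)).continuousOn
  · simp
  · simp
  · rintro _ ⟨t, ht, rfl⟩
    apply h
    constructor <;> nlinarith [ht.1, ht.2]

def NoCircle (Y : Type*) [TopologicalSpace Y] : Prop :=
  ¬ ∃ φ : Circle → Y, Continuous φ ∧ Function.Injective φ

lemma circle_of_arcs {Y : Type*} [TopologicalSpace Y] (f g : ℝ → Y) (hf : Continuous f)
    (hg : Continuous g) (hfi : InjOn f (Icc 0 1)) (hgi : InjOn g (Icc 0 1)) (h0 : f 0 = g 0)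
    (h1 : f 1 = g 1) (hd : ∀ t ∈ Ioo (0:ℝ) 1, g t ∉ f '' Icc 0 1) : ¬ NoCircle Y := by
  rw [NoCircle, not_not]
  let L : ℝ → Y := fun t => if t ≤ 1 then f t else g (2 - t)
  have hL : Continuous L := by
    apply Continuous.if_le hf (hg.comp (by fun_prop)) continuous_id continuous_const
    rintro x rfl
    norm_num [h1]
  have hfact : Fact ((0:ℝ) < 2) := ⟨by norm_num⟩
  have hLinj : InjOn L (Ico 0 2) := by
    have key : ∀ s ∈ Ico (0:ℝ) 2, ∀ t ∈ Ico (0:ℝ) 2, s ≤ 1 → ¬ t ≤ 1 → L s ≠ L t := by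
      intro s hs t ht hs1 ht1 hst
      simp only [L, hs1, ht1, if_true, if_false] at hst
      push Not at ht1
      exact hd (2 - t) ⟨by linarith [ht.2], by linarith⟩ ⟨s, ⟨hs.1, hs1⟩, hst⟩
    intro s hs t ht hst
    by_cases hs1 : s ≤ 1
    · by_cases ht1 : t ≤ 1
      · simp only [L, hs1, ht1, if_true] at hst
        exact hfi ⟨hs.1, hs1⟩ ⟨ht.1, ht1⟩ hst
      · exact absurd hst (key s hs t ht hs1 ht1)
    · by_cases ht1 : t ≤ 1
      · exact absurd hst.symm (key t ht s hs ht1 hs1)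
      · simp only [L, hs1, ht1, if_false] at hst
        push Not at hs1 ht1
        have := hgi ⟨by linarith [hs.2], by linarith⟩ ⟨by linarith [ht.2], by linarith⟩ hst
        linarith
  let φ : AddCircle (2:ℝ) → Y := AddCircle.liftIco 2 0 L
  have hφc : Continuous φ := by
    apply AddCircle.liftIco_continuous _ hL.continuousOn
    norm_num [L, h0]
  have hφi : Function.Injective φ := by
    intro x y hxy
    obtain ⟨s, hs, rfl⟩ := AddCircle.eq_coe_Ico x
    obtain ⟨t, ht, rfl⟩ := AddCircle.eq_coe_Ico y
    simp only [φ] at hxy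
    rw [AddCircle.liftIco_zero_coe_apply hs, AddCircle.liftIco_zero_coe_apply ht] at hxy
    rw [hLinj hs ht hxy]
  let e := AddCircle.homeomorphCircle (T := 2) (by norm_num)
  exact ⟨φ ∘ e.symm, hφc.comp e.symm.continuous, hφi.comp e.symm.injective⟩

lemma arc_unique {Y : Type*} [MetricSpace Y] [CompactSpace Y] (hY : NoCircle Y) (f : ℝ → Y)
    (hf : Continuous f) (hfi : InjOn f (Icc 0 1)) {s : ℝ} (hs : s ∈ Icc (0:ℝ) 1) :
    ¬ JoinedIn {f s}ᶜ (f 0) (f 1) := by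
  intro hj
  obtain ⟨γ', hγ'⟩ := hj
  obtain ⟨γ, hγc, hγ0, hγ1, hγ⟩ : ∃ γ : ℝ → Y, Continuous γ ∧ γ 0 = f 0 ∧ γ 1 = f 1 ∧
      ∀ t ∈ Icc (0:ℝ) 1, γ t ≠ f s :=
    ⟨γ'.extend, γ'.continuous_extend, γ'.extend_zero, γ'.extend_one, fun t ht => by
      rw [Path.extend_apply γ' ht]; exact hγ' _⟩
  have hc1 : IsClosed (f '' Icc 0 s) := (isCompact_Icc.image hf).isClosed
  have hc2 : IsClosed (f '' Icc s 1) := (isCompact_Icc.image hf).isClosed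
  have hA : IsCompact (Icc (0:ℝ) 1 ∩ γ ⁻¹' (f '' Icc 0 s)) :=
    isCompact_Icc.inter_right (hc1.preimage hγc)
  obtain ⟨t1, ⟨ht1, u, hu, hfu⟩, ht1max⟩ := hA.exists_isGreatest
    ⟨0, by simp, 0, ⟨le_rfl, hs.1⟩, hγ0.symm⟩
  have hB : IsCompact (Icc t1 1 ∩ γ ⁻¹' (f '' Icc s 1)) :=
    isCompact_Icc.inter_right (hc2.preimage hγc)
  obtain ⟨t2, ⟨ht2, v, hv, hfv⟩, ht2min⟩ := hB.exists_isLeast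
    ⟨1, ⟨ht1.2, le_rfl⟩, 1, ⟨hs.2, le_rfl⟩, hγ1.symm⟩
  have hus : u < s := lt_of_le_of_ne hu.2 (fun h => hγ t1 ht1 (by rw [← hfu, h]))
  have hsv : s < v := lt_of_le_of_ne hv.1 (fun h => hγ t2 ⟨ht1.1.trans ht2.1, ht2.2⟩ (by rw [← hfv, h]))
  have hu1 : u ∈ Icc (0:ℝ) 1 := ⟨hu.1, by linarith [hs.2]⟩
  have hv1 : v ∈ Icc (0:ℝ) 1 := ⟨by linarith [hs.1], hv.2⟩
  have hne : f u ≠ f v := fun h => by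
    have := hfi hu1 hv1 h
    linarith
  have hjo : JoinedIn ({f u, f v} ∪ (f '' Icc 0 1)ᶜ) (f u) (f v) := by
    rw [hfu, hfv]
    apply joinedIn_of_cont γ hγc ht2.1
    intro t ht
    by_cases h1 : t = t1
    · left; left; rw [h1]
    by_cases h2 : t = t2
    · left; right; rw [h2]; rfl
    right
    rintro ⟨w, hw, hfw⟩
    rcases le_total w s with hws | hws
    · have := ht1max (a := t) ⟨⟨ht1.1.trans ht.1, ht.2.trans ht2.2⟩, w, ⟨hw.1, hws⟩, hfw⟩
      exact h1 (le_antisymm this ht.1)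
    · have := ht2min (a := t) ⟨⟨ht.1, ht.2.trans ht2.2⟩, w, ⟨hws, hw.2⟩, hfw⟩
      exact h2 (le_antisymm ht.2 this)
  obtain ⟨β, hβc, hβi, hβ0, hβ1, hβm⟩ := arc_of_joined hjo hne
  have hmem : ∀ t ∈ Icc (0:ℝ) 1, u + t * (v - u) ∈ Icc u v := by
    intro t ht
    constructor <;> nlinarith [ht.1, ht.2]
  refine circle_of_arcs (fun t => f (u + t * (v - u))) β (hf.comp (by fun_prop)) hβc ?_ hβi
    (by simp [hβ0]) (by simp [hβ1]) ?_ hY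
  · intro x hx y hy hxy
    have h1 := hmem x hx
    have h2 := hmem y hy
    have h3 := hfi ⟨hu1.1.trans h1.1, h1.2.trans hv1.2⟩ ⟨hu1.1.trans h2.1, h2.2.trans hv1.2⟩ hxy
    have h4 : v - u ≠ 0 := by intro h; linarith
    have h5 : x * (v - u) = y * (v - u) := by linarith
    exact mul_right_cancel₀ h4 h5
  · rintro t ht ⟨w, hw, hfw⟩
    have h1 := hmem w hw
    rcases hβm t ⟨ht.1.le, ht.2.le⟩ with (h2 | h2) | h2
    · rw [← hβ0] at h2
      have := hβi ⟨ht.1.le, ht.2.le⟩ ⟨le_rfl, zero_le_one⟩ h2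
      linarith [ht.1]
    · rw [mem_singleton_iff, ← hβ1] at h2
      have := hβi ⟨ht.1.le, ht.2.le⟩ ⟨zero_le_one, le_rfl⟩ h2
      linarith [ht.2]
    · exact h2 ⟨_, ⟨hu1.1.trans h1.1, h1.2.trans hv1.2⟩, hfw⟩

/-- In a Peano continuum without circles, connected sets contain arcs between their points. -/
lemma arc_sub_conn {Y : Type*} [MetricSpace Y] [CompactSpace Y] [LocallyPathConnectedSpace Y]
    (hY : NoCircle Y) {C : Set Y} (hC : IsPreconnected C) (f : ℝ → Y)
    (hf : Continuous f) (hfi : InjOn f (Icc 0 1)) (h0 : f 0 ∈ C) (h1 : f 1 ∈ C)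
    {s : ℝ} (hs : s ∈ Icc (0:ℝ) 1) : f s ∈ C := by
  by_contra hcon
  apply arc_unique hY f hf hfi hs
  have hsub : C ⊆ {f s}ᶜ := fun x hx hxs => hcon (by rw [← mem_singleton_iff.mp hxs]; exact hx)
  have hopen : IsOpen (connectedComponentIn {f s}ᶜ (f 0)) := isOpen_compl_singleton.connectedComponentIn
  have hconn : IsConnected (connectedComponentIn {f s}ᶜ (f 0)) :=
    isConnected_connectedComponentIn_iff.mpr (hsub h0)
  have hpc := hopen.isConnected_iff_isPathConnected.mp hconn
  have hCs := hC.subset_connectedComponentIn h0 hsub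
  exact (hpc.joinedIn _ (hCs h0) _ (hCs h1)).mono (connectedComponentIn_subset _ _)

theorem dim_le_one_of_noCircle {Y : Type*} [MetricSpace Y] [CompactSpace Y] [ConnectedSpace Y]
    [LocallyPathConnectedSpace Y] (hY : NoCircle Y) : CovDimLE Y 1 := by
  have : PathConnectedSpace Y := PathConnectedSpace.of_locallyPathConnectedSpace
  obtain ⟨p⟩ : Nonempty Y := inferInstance
  let T : Y → Set Y := fun x => {z | ¬ JoinedIn {z}ᶜ p x}
  have hself : ∀ x, x ∈ T x := fun x hj => hj.target_mem rfl
  have huniv : ∀ x y : Y, JoinedIn univ x y := fun x y => joinedIn_univ.mpr (PathConnectedSpace.joined x y)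
  have hTW : ∀ (W : Set Y) (x y : Y), JoinedIn W x y → ∀ z ∈ T y, z ∉ W → z ∈ T x := by
    intro W x y hj z hz hzW hjx
    apply hz
    exact hjx.trans (hj.mono fun w hw hwz => hzW (by rw [← mem_singleton_iff.mp hwz]; exact hw))
  obtain ⟨h, hc, hm, hs⟩ := whitney T (fun x => ⟨x, hself x⟩) (by
    intro x ε hε
    have hb : Metric.ball x (ε/2) ∈ nhds x := Metric.ball_mem_nhds x (half_pos hε)
    filter_upwards [pathComponentIn_mem_nhds hb] with y hy
    have hxy : JoinedIn (Metric.ball x (ε/2)) x y := hy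
    have hyb := Metric.mem_ball.mp hxy.target_mem
    constructor
    · intro z hz
      by_cases hzW : z ∈ Metric.ball x (ε/2)
      · exact ⟨x, hself x, by have := Metric.mem_ball.mp hzW; linarith⟩
      · exact ⟨z, hTW _ x y hxy z hz hzW, by simp [hε.le]⟩
    · intro z hz
      by_cases hzW : z ∈ Metric.ball x (ε/2)
      · refine ⟨y, hself y, ?_⟩
        have := Metric.mem_ball.mp hzW
        rw [dist_comm] at hyb
        linarith [dist_triangle z x y]
      · exact ⟨z, hTW _ y x hxy.symm z hz hzW, by simp [hε.le]⟩)
  have hstrict : ∀ z x, z ∈ T x → z ≠ x → h x < h z := by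
    intro z x hzx hne
    have hsub : T z ⊆ T x := by
      intro w hw hj
      apply hzx
      obtain ⟨γ, hγ⟩ := hj
      refine ⟨γ, fun t ht => ?_⟩
      apply hw
      have h1 := joinedIn_of_cont (F := {w}ᶜ) γ.extend γ.continuous_extend t.2.1 (fun s hs => by
        rw [Path.extend_apply γ ⟨hs.1, hs.2.trans t.2.2⟩]; exact hγ _)
      rw [Path.extend_zero, Path.extend_apply γ t.2] at h1
      rwa [← mem_singleton_iff.mp ht]
    refine hs z x hsub ⟨x, hself x, ?_⟩
    have hpx : p ≠ x := by
      rintro rfl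
      apply hzx
      exact JoinedIn.refl (fun h' => hne (mem_singleton_iff.mp h').symm)
    obtain ⟨f, hf, hfi, hf0, hf1, -⟩ := arc_of_joined (huniv p x) hpx
    have hzf : z ∈ f '' Icc 0 1 := by
      by_contra hcon
      apply hzx
      have := joinedIn_of_cont (F := {z}ᶜ) f hf zero_le_one (fun t ht htz => hcon ⟨t, ht, htz⟩)
      rwa [hf0, hf1] at this
    obtain ⟨t, ht, rfl⟩ := hzf
    have ht1 : t < 1 := lt_of_le_of_ne ht.2 (by rintro rfl; exact hne hf1)
    have hsub2 : T (f t) ⊆ f '' Icc 0 t := by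
      intro w hw
      by_contra hcon
      apply hw
      have := joinedIn_of_cont (F := {w}ᶜ) f hf ht.1 (fun t ht htz => hcon ⟨t, ht, htz⟩)
      rwa [hf0] at this
    have hcl : IsClosed (f '' Icc 0 t) := (isCompact_Icc.image hf).isClosed
    intro hx
    obtain ⟨s, hs, hfs⟩ := hcl.closure_subset_iff.mpr hsub2 hx
    rw [← hf1] at hfs
    have := hfi ⟨hs.1, hs.2.trans ht.2⟩ ⟨zero_le_one, le_rfl⟩ hfs
    linarith [hs.2]
  apply light_dim h hc
  intro C₀ hC₀ hconst₀
  suffices hsuff : (closure C₀).Subsingleton from hsuff.anti subset_closure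
  have hC : IsPreconnected (closure C₀) := hC₀.closure
  have hcl : IsClosed (closure C₀) := isClosed_closure
  have hconst : ∀ x ∈ closure C₀, ∀ y ∈ closure C₀, h x = h y := by
    have h1 : ∀ x ∈ closure C₀, ∀ y ∈ C₀, h x = h y := by
      intro x hx y hy
      have : closure C₀ ⊆ {x | h x = h y} :=
        closure_minimal (fun x hx => hconst₀ x hx y hy) (isClosed_eq hc continuous_const)
      exact this hx
    intro x hx y hy
    obtain ⟨w, hw⟩ := closure_nonempty_iff.mp ⟨x, hx⟩
    rw [h1 x hx w hw, h1 y hy w hw]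
  generalize closure C₀ = C at hC hcl hconst
  clear hC₀ hconst₀
  intro a ha b hb
  -- first hitting point of a path from `p` to `a`
  obtain ⟨α', -⟩ := huniv p a
  have hα : Continuous α'.extend := α'.continuous_extend
  have hα0 : α'.extend 0 = p := α'.extend_zero
  have hα1 : α'.extend 1 = a := α'.extend_one
  generalize (α'.extend : ℝ → Y) = α at hα hα0 hα1
  have hcomp : IsCompact (Icc (0:ℝ) 1 ∩ α ⁻¹' C) := isCompact_Icc.inter_right (hcl.preimage hα)
  obtain ⟨t, ⟨ht, htC⟩, htmin⟩ := hcomp.exists_isLeast ⟨1, by simp, by rw [mem_preimage, hα1]; exact ha⟩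
  have key : ∀ x ∈ C, x = α t := by
    intro x hx
    by_contra hne
    have hqx : α t ∈ T x := by
      rintro ⟨γ, hγ⟩
      obtain ⟨β, hβc, hβi, hβ0, hβ1, -⟩ := arc_of_joined (huniv (α t) x) (Ne.symm hne)
      have hβC : ∀ s ∈ Icc (0:ℝ) 1, β s ∈ C := fun s hs =>
        arc_sub_conn hY hC β hβc hβi (by rw [hβ0]; exact htC) (by rw [hβ1]; exact hx) hs
      have hγcl : IsClosed (range γ) := (isCompact_range γ.continuous).isClosed
      have hnb : β ⁻¹' (range γ)ᶜ ∈ nhds (0:ℝ) := by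
        apply (hγcl.isOpen_compl.preimage hβc).mem_nhds
        rw [mem_preimage, hβ0]
        rintro ⟨s, hs⟩
        exact hγ s hs
      obtain ⟨δ, hδ, hball⟩ := Metric.mem_nhds_iff.mp hnb
      let s := min (δ/2) 1
      have hs0 : 0 < s := lt_min (half_pos hδ) one_pos
      have hs1 : s ≤ 1 := min_le_right _ _
      have hsδ : s < δ := lt_of_le_of_lt (min_le_left _ _) (half_lt_self hδ)
      have hsI : s ∈ Icc (0:ℝ) 1 := ⟨hs0.le, hs1⟩
      have hsγ : β s ∉ range γ := hball (by
        rw [Metric.mem_ball, Real.dist_eq, sub_zero, abs_of_pos hs0]; exact hsδ)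
      apply arc_unique hY β hβc hβi hsI
      rw [hβ0, hβ1]
      have j1 : JoinedIn {β s}ᶜ p (α t) := by
        rw [← hα0]
        apply joinedIn_of_cont α hα ht.1
        intro r hr hrs
        have hrs' : α r = β s := hrs
        have h1 : t ≤ r := htmin ⟨⟨hr.1, hr.2.trans ht.2⟩, by
          rw [mem_preimage, hrs']; exact hβC s hsI⟩
        have h2 : r = t := le_antisymm hr.2 h1
        rw [h2, ← hβ0] at hrs'
        have := hβi ⟨le_rfl, zero_le_one⟩ hsI hrs'
        linarith
      have j2 : JoinedIn {β s}ᶜ p x := ⟨γ, fun r hr => hsγ ⟨r, hr⟩⟩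
      exact j1.symm.trans j2
    have := hstrict _ _ hqx (Ne.symm hne)
    rw [hconst x hx (α t) htC] at this
    exact lt_irrefl _ this
  rw [key a ha, key b hb]

lemma covDim_mono {Y : Type*} [TopologicalSpace Y] (h : CovDimLE Y 0) : CovDimLE Y 1 := by
  intro U h1 h2 h3
  obtain ⟨V, v1, v2, v3, v4, v5⟩ := h U h1 h2 h3
  exact ⟨V, v1, v2, v3, v4, fun x => (v5 x).trans (by norm_num)⟩

/-- Smaller and smaller embedded circles converging to a point of local dimension ≥ 2. -/
theorem stmt_6 {X : Type} [MetricSpace X] [CompactSpace X]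
    (hdim : ¬ CovDimLE X 1)
    (h : ∃ x₀ : X, ∀ D : Set X, D ∈ nhds x₀ → IsClosed D → ¬ CovDimLE D 1) :
    ∃ x₀ : X,
      (∀ r : ℝ, 0 < r → ¬ CovDimLE (Metric.closedBall x₀ r) 0 →
          ConnectedSpace (Metric.closedBall x₀ r) ∧
          LocallyConnectedSpace (Metric.closedBall x₀ r) ∧
          ¬ CovDimLE (Metric.closedBall x₀ r) 1) →
      ∀ k : ℕ, 0 < k → ∃ φ : Circle → X, Continuous φ ∧ Topology.IsEmbedding φ ∧
        Set.range φ ⊆ Metric.closedBall x₀ (1 / k) := by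
  obtain ⟨x₀, hx⟩ := h
  refine ⟨x₀, fun H k hk => ?_⟩
  have hr : (0:ℝ) < 1 / k := by positivity
  have hd : ¬ CovDimLE (Metric.closedBall x₀ (1 / (k:ℝ))) 1 :=
    hx _ (Metric.closedBall_mem_nhds x₀ hr) Metric.isClosed_closedBall
  obtain ⟨hconn, hlc, -⟩ := H _ hr (fun h0 => hd (covDim_mono h0))
  have hcs : CompactSpace (Metric.closedBall x₀ (1 / (k:ℝ))) :=
    isCompact_iff_compactSpace.mp Metric.isClosed_closedBall.isCompact
  have hlp : LocallyPathConnectedSpace (Metric.closedBall x₀ (1 / (k:ℝ))) := peano_locPath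
  have hnc : ¬ NoCircle (Metric.closedBall x₀ (1 / (k:ℝ))) := fun hn => hd (dim_le_one_of_noCircle hn)
  rw [NoCircle, not_not] at hnc
  obtain ⟨φ, hφc, hφi⟩ := hnc
  have hc : Continuous (fun c => (φ c : X)) := continuous_subtype_val.comp hφc
  refine ⟨fun c => (φ c : X), hc, ?_, ?_⟩
  · exact (hc.isClosedEmbedding (Subtype.val_injective.comp hφi)).isEmbedding
  · rintro _ ⟨c, rfl⟩
    exact (φ c).2
end
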